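/- Fix positive integers c and n. For every admissible pair (A,B) there exists a polynomial P_{A,B} ∈ ℤ[X₁,…,Xₙ] such that for all positive integers x₁,…,xₙ satisfying the genericity condition Σ_{i∈I} xᵢ ≠ Σ_{j∈J} xⱼ for all pairs of distinct subsets I, J ⊆ {1,…,n}, the multiplicity of the lattice path γ(A,B) in the rectangle of width c and height d = x₁+⋯+xₙ with boundary data μ₁ = (c), μ₂ = (1,…,1) (c ones), ν₁ = (x₁,…,xₙ), ν₂ = (d) satisfies mult(γ(A,B)) = P_{A,B}(x₁,…,xₙ). -/

import Mathlib

open Classical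

noncomputable section

namespace TropPaths

/-- Lattice points of the plane. -/
abbrev Pt := ℤ × ℤ

/-- The order on `ℤ²` induced by `λ(x,y) = x - εy` for a small irrational `ε > 0`:
`p ≺ q` iff `p₁ < q₁`, or (`p₁ = q₁` and `p₂ > q₂`). -/
def lamLT (p q : Pt) : Prop := p.1 < q.1 ∨ (p.1 = q.1 ∧ q.2 < p.2)

/-- A lattice path, recorded as the list of its points, is `λ`-increasing. -/
def Increasing (γ : List Pt) : Prop := List.Chain' lamLT γ

/-- The determinant of two vectors in `ℤ²`. -/
def det (u v : Pt) : ℤ := u.1 * v.2 - u.2 * v.1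

/-- The `k`-th point of a path (junk value out of range). -/
def pt (γ : List Pt) (k : ℕ) : Pt := γ.getD k (0, 0)

/-- The `k`-th step vector of a path. -/
def stepAt (γ : List Pt) (k : ℕ) : Pt := pt γ (k + 1) - pt γ k

/-- The list of all step vectors of a path. -/
def steps (γ : List Pt) : List Pt := List.zipWith (fun a b => b - a) γ γ.tail

/-- The multiset of down steps `(0,-s)`, `s > 0`, of a path. -/
def downSteps (γ : List Pt) : Multiset Pt :=
  Multiset.filter (fun v => v.1 = 0 ∧ v.2 < 0) (steps γ : Multiset Pt)

/-- The multiset of up-right steps of a path. -/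
def upRightSteps (γ : List Pt) : Multiset Pt :=
  Multiset.filter (fun v => 0 < v.1 ∧ 0 < v.2) (steps γ : Multiset Pt)

/-- The path makes a turn of sign `s` at the (interior) index `k`; for left turns
`s = (0 < ·)`, for right turns `s = (· < 0)`. -/
def TurnAt (s : ℤ → Prop) (γ : List Pt) (k : ℕ) : Prop :=
  0 < k ∧ k + 1 < γ.length ∧ s (det (pt γ k - pt γ (k - 1)) (pt γ (k + 1) - pt γ k))

/-- `k` is the first turn of sign `s` of the path. -/
def FirstTurn (s : ℤ → Prop) (γ : List Pt) (k : ℕ) : Prop :=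
  TurnAt s γ k ∧ ∀ j, TurnAt s γ j → k ≤ j

/-- Twice the area of the triangle with vertices `γ(k-1), γ(k), γ(k+1)`. -/
def triArea2 (γ : List Pt) (k : ℕ) : ℕ :=
  (det (pt γ k - pt γ (k - 1)) (pt γ (k + 1) - pt γ k)).natAbs

/-- The path obtained by cutting the corner at index `k`, i.e. deleting the point `γ(k)`. -/
def cut (γ : List Pt) (k : ℕ) : List Pt := γ.eraseIdx k

/-- The path obtained by completing the parallelogram at index `k`, i.e. replacing
`γ(k)` by `γ(k-1) + γ(k+1) - γ(k)`. -/
def push (γ : List Pt) (k : ℕ) : List Pt :=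
  γ.set k (pt γ (k - 1) + pt γ (k + 1) - pt γ k)

/-- All points of the path lie in `Δ`. -/
def Inside (Δ : Set Pt) (γ : List Pt) : Prop := ∀ z ∈ γ, z ∈ Δ

/-- Mikhalkin's multiplicity recursion, as a functional relation: `MultRel Δ Init s γ m`
means that the recursion (performed always at the *first* turn of sign `s`) assigns the
multiplicity `m` to the path `γ`.  Here `Δ` is the set of lattice points of the polygon,
`Init` the set of initial paths (of multiplicity `1`), and `s` the turn sign
(`0 < ·` for left turns / `mult₊`, `· < 0` for right turns / `mult₋`). -/
inductive MultRel (Δ : Set Pt) (Init : List Pt → Prop) (s : ℤ → Prop) : List Pt → ℕ → Prop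
  | init {γ : List Pt} : Init γ → MultRel Δ Init s γ 1
  | noTurn {γ : List Pt} : ¬Init γ → (∀ k, ¬TurnAt s γ k) → MultRel Δ Init s γ 0
  | stepIn {γ : List Pt} {k m' m'' : ℕ} : ¬Init γ → FirstTurn s γ k →
      Inside Δ (push γ k) → MultRel Δ Init s (cut γ k) m' →
      MultRel Δ Init s (push γ k) m'' →
      MultRel Δ Init s γ (triArea2 γ k * m' + m'')
  | stepOut {γ : List Pt} {k m' : ℕ} : ¬Init γ → FirstTurn s γ k →
      ¬Inside Δ (push γ k) → MultRel Δ Init s (cut γ k) m' →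
      MultRel Δ Init s γ (triArea2 γ k * m')

/-- The multiplicity function determined by Mikhalkin's recursion. -/
def multOf (Δ : Set Pt) (Init : List Pt → Prop) (s : ℤ → Prop) (γ : List Pt) : ℕ :=
  if h : ∃ m, MultRel Δ Init s γ m then h.choose else 0

/-- `γ ≺ δ`: the path `δ` is obtained from `γ` by finitely many steps of the multiplicity
recursion (each step cuts the corner at the first turn of sign `s`, or completes the
parallelogram there). -/
inductive Reaches (Δ : Set Pt) (Init : List Pt → Prop) (s : ℤ → Prop) : List Pt → List Pt → Prop
  | refl (γ : List Pt) : Reaches Δ Init s γ γ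
  | cutStep {γ δ : List Pt} {k : ℕ} : ¬Init γ → FirstTurn s γ k →
      Reaches Δ Init s (cut γ k) δ → Reaches Δ Init s γ δ
  | pushStep {γ δ : List Pt} {k : ℕ} : ¬Init γ → FirstTurn s γ k →
      Inside Δ (push γ k) → Reaches Δ Init s (push γ k) δ → Reaches Δ Init s γ δ

/-- The lattice path starting at `p` with the given list of step vectors. -/
def pathFrom : Pt → List Pt → List Pt
  | p, [] => [p]
  | p, v :: vs => p :: pathFrom (p + v) vs

/-- Horizontal (rightward) steps of the given sizes. -/
def hSteps (l : List ℕ) : List Pt := l.map fun k => ((k : ℤ), 0)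

/-- Vertical downward steps of the given sizes. -/
def dSteps (l : List ℕ) : List Pt := l.map fun k => ((0 : ℤ), -(k : ℤ))

/-- A multiset of positive integers is a partition of `t`. -/
def IsPartition (m : Multiset ℕ) (t : ℕ) : Prop := (∀ k ∈ m, 0 < k) ∧ m.sum = t

/-! ## The rectangle `[0,c] × [0,d]` -/

/-- The lattice points of the rectangle with vertices `(0,0), (c,0), (0,d), (c,d)`. -/
def rect (c d : ℕ) : Set Pt := {z | 0 ≤ z.1 ∧ z.1 ≤ (c : ℤ) ∧ 0 ≤ z.2 ∧ z.2 ≤ (d : ℤ)}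

/-- `β₊`-initial paths of the rectangle: from `p = (0,d)` clockwise along the top edge with
step sizes the parts of `μ₂` and then down the right edge with step sizes the parts of `ν₂`. -/
def InitPlusRect (d : ℕ) (μ₂ ν₂ : Multiset ℕ) (γ : List Pt) : Prop :=
  ∃ s t : List ℕ, (s : Multiset ℕ) = μ₂ ∧ (t : Multiset ℕ) = ν₂ ∧
    γ = pathFrom (0, (d : ℤ)) (hSteps s ++ dSteps t)

/-- `β₋`-initial paths of the rectangle: from `p = (0,d)` counterclockwise down the left edge
with step sizes the parts of `ν₁` and then along the bottom edge with step sizes the parts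
of `μ₁`. -/
def InitMinusRect (d : ℕ) (μ₁ ν₁ : Multiset ℕ) (γ : List Pt) : Prop :=
  ∃ s t : List ℕ, (s : Multiset ℕ) = ν₁ ∧ (t : Multiset ℕ) = μ₁ ∧
    γ = pathFrom (0, (d : ℤ)) (dSteps s ++ hSteps t)

/-- `mult₊` for the rectangle with boundary data `(μ₁, μ₂, ν₁, ν₂)`. -/
def multPlusRect (c d : ℕ) (μ₂ ν₂ : Multiset ℕ) : List Pt → ℕ :=
  multOf (rect c d) (InitPlusRect d μ₂ ν₂) (fun x => 0 < x)

/-- `mult₋` for the rectangle with boundary data `(μ₁, μ₂, ν₁, ν₂)`. -/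
def multMinusRect (c d : ℕ) (μ₁ ν₁ : Multiset ℕ) : List Pt → ℕ :=
  multOf (rect c d) (InitMinusRect d μ₁ ν₁) (fun x => x < 0)

/-- `mult = mult₊ · mult₋` for the rectangle with boundary data `(μ₁, μ₂, ν₁, ν₂)`. -/
def multRect (c d : ℕ) (μ₁ μ₂ ν₁ ν₂ : Multiset ℕ) (γ : List Pt) : ℕ :=
  multPlusRect c d μ₂ ν₂ γ * multMinusRect c d μ₁ ν₁ γ

/-- A `λ`-increasing lattice path from `(0,d)` to `(c,0)` contained in the rectangle. -/
def IsPathRect (c d : ℕ) (γ : List Pt) : Prop :=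
  Increasing γ ∧ γ.head? = some (0, (d : ℤ)) ∧ γ.getLast? = some ((c : ℤ), 0) ∧
    Inside (rect c d) γ

/-- The genericity condition: all subset sums of the `xᵢ` are distinct. -/
def Generic {n : ℕ} (x : Fin n → ℕ) : Prop :=
  ∀ I J : Finset (Fin n), I ≠ J → ∑ i ∈ I, x i ≠ ∑ j ∈ J, x j

/-! ## Admissible pairs and the paths `γ(A,B)` -/

/-- An admissible pair `(A,B)`: pairwise disjoint sequences `A₀,…,A_{c-1}` in `{1,…,n}`
whose entries together partition `{1,…,n}`, and pairwise disjoint subsets `B₀,…,B_{c-1}`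
with union `{1,…,n}`, such that `B₀ ≠ ∅` and
`B_k ⊆ (A₀ ∪ ⋯ ∪ A_k) \ (B₀ ∪ ⋯ ∪ B_{k-1})` for all `k`. -/
def IsAdmissible {c n : ℕ} (A : Fin c → List (Fin n)) (B : Fin c → Finset (Fin n)) : Prop :=
  ((List.ofFn A).flatten : Multiset (Fin n)) = (Finset.univ : Finset (Fin n)).val ∧
  (∀ i : Fin n, ∃! k : Fin c, i ∈ B k) ∧
  (∀ k : Fin c, (k : ℕ) = 0 → (B k).Nonempty) ∧
  ∀ k : Fin c, B k ⊆
    (Finset.univ.filter fun i => ∃ j : Fin c, j ≤ k ∧ i ∈ A j) \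
      (Finset.univ.filter fun i => ∃ j : Fin c, j < k ∧ i ∈ B j)

/-- The steps of `γ(A,B)` in the column `x = k`: down steps of sizes `xᵢ`, `i ∈ A_k`, in
order, followed by the step `(1, Σ_{i ∈ B_k} xᵢ)` to the next column. -/
def colSteps {c n : ℕ} (x : Fin n → ℕ) (A : Fin c → List (Fin n))
    (B : Fin c → Finset (Fin n)) (k : Fin c) : List Pt :=
  ((A k).map fun i => ((0 : ℤ), -(x i : ℤ))) ++ [((1 : ℤ), ∑ i ∈ B k, (x i : ℤ))]

/-- The lattice path `γ(A,B)` associated to an admissible pair, from `(0,d)` to `(c,0)`,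
whose last step is the full right edge. -/
def gammaAB {c n : ℕ} (x : Fin n → ℕ) (A : Fin c → List (Fin n))
    (B : Fin c → Finset (Fin n)) : List Pt :=
  pathFrom (0, ((∑ i, x i : ℕ) : ℤ))
    ((List.ofFn (colSteps x A B)).flatten ++ [((0 : ℤ), -((∑ i, x i : ℕ) : ℤ))])

/-! ## The trapezoid of Lemma 4.? -/

/-- The lattice points of the trapezoid with vertices `(0,0), (0,a), (1,a), (1,b)`. -/
def trap (a b : ℕ) : Set Pt :=
  {z | 0 ≤ z.1 ∧ z.1 ≤ 1 ∧ (b : ℤ) * z.1 ≤ z.2 ∧ z.2 ≤ (a : ℤ)}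

/-- `β₊`-initial paths of the trapezoid: one step of lattice length 1 along the top edge,
then down the right edge with step sizes the parts of `βright`. -/
def InitPlusTrap (a : ℕ) (βright : Multiset ℕ) (γ : List Pt) : Prop :=
  ∃ t : List ℕ, (t : Multiset ℕ) = βright ∧
    γ = pathFrom (0, (a : ℤ)) (((1 : ℤ), (0 : ℤ)) :: dSteps t)

/-! ## Automorphisms of a partition -/

/-- `|Aut ν| = ∏_k m_k(ν)!` where `m_k(ν)` is the number of parts of `ν` equal to `k`. -/
def autCard (m : Multiset ℕ) : ℕ :=
  (m.dedup.map fun k => (m.count k).factorial).prod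


/-! ## Helpers: step lists -/

theorem pathFrom_length (p : Pt) (L : List Pt) : (pathFrom p L).length = L.length + 1 := by
  induction L generalizing p with
  | nil => rfl
  | cons v l ih => simp [pathFrom, ih]

theorem pt_zero (p : Pt) (L : List Pt) : pt (pathFrom p L) 0 = p := by
  cases L <;> rfl

theorem pt_succ_cons (p v : Pt) (l : List Pt) (k : ℕ) :
    pt (pathFrom p (v :: l)) (k + 1) = pt (pathFrom (p + v) l) k := by
  simp [pathFrom, pt]

theorem pt_diff (p : Pt) (L : List Pt) (k : ℕ) (hk : k < L.length) :
    pt (pathFrom p L) (k + 1) - pt (pathFrom p L) k = L[k] := by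
  induction L generalizing p k with
  | nil => simp at hk
  | cons v l ih =>
    cases k with
    | zero => rw [pt_succ_cons, pt_zero, pt_zero]; simp
    | succ k =>
      rw [pt_succ_cons, pt_succ_cons, ih]
      · simp
      · simpa using hk

theorem turnAt_iff (s : ℤ → Prop) (p : Pt) (L : List Pt) (k : ℕ) :
    TurnAt s (pathFrom p L) (k + 1) ↔ ∃ h : k + 1 < L.length, s (det L[k] L[k + 1]) := by
  unfold TurnAt
  rw [pathFrom_length]
  constructor
  · rintro ⟨_, h, hs⟩
    have h' : k + 1 < L.length := by omega
    refine ⟨h', ?_⟩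
    rw [pt_diff p L (k + 1) h', Nat.add_sub_cancel, pt_diff p L k (by omega)] at hs
    exact hs
  · rintro ⟨h, hs⟩
    refine ⟨by omega, by omega, ?_⟩
    rw [pt_diff p L (k + 1) h, Nat.add_sub_cancel, pt_diff p L k (by omega)]
    exact hs

/-- No turn of sign `s` in the list of steps. -/
def NoTurn (s : ℤ → Prop) (L : List Pt) : Prop := List.IsChain (fun u v => ¬ s (det u v)) L

theorem noTurn_turnAt {s : ℤ → Prop} {L : List Pt} (h : NoTurn s L) (p : Pt) (k : ℕ) :
    ¬ TurnAt s (pathFrom p L) k := by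
  cases k with
  | zero => intro h; exact absurd h.1 (lt_irrefl _)
  | succ k =>
    rw [turnAt_iff]
    rintro ⟨hk, hs⟩
    exact (List.isChain_iff_getElem.mp h) k hk hs

theorem firstTurn_of {s : ℤ → Prop} (p : Pt) {P Q : List Pt} {a w : Pt}
    (h : NoTurn s (P ++ [a])) (hs : s (det a w)) :
    FirstTurn s (pathFrom p (P ++ a :: w :: Q)) (P.length + 1) := by
  constructor
  · rw [turnAt_iff]
    refine ⟨by simp, ?_⟩
    simpa using hs
  · intro j hj
    by_contra hlt
    push Not at hlt
    cases j with
    | zero => exact absurd hj.1 (lt_irrefl _)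
    | succ j =>
      rw [turnAt_iff] at hj
      obtain ⟨hj1, hj2⟩ := hj
      have hh := (List.isChain_iff_getElem.mp h) j (by simp; omega)
      apply hh
      have e : P ++ a :: w :: Q = (P ++ [a]) ++ w :: Q := by simp
      have e1 : (P ++ a :: w :: Q)[j] = (P ++ [a])[j]'(by simp; omega) := by
        simp only [e]; rw [List.getElem_append_left]
      have e2 : (P ++ a :: w :: Q)[j+1] = (P ++ [a])[j+1]'(by simp; omega) := by
        simp only [e]; rw [List.getElem_append_left]
      rw [← e1, ← e2]; exact hj2

theorem cut_pathFrom (p : Pt) (P Q : List Pt) (a w : Pt) :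
    cut (pathFrom p (P ++ a :: w :: Q)) (P.length + 1) = pathFrom p (P ++ (a + w) :: Q) := by
  induction P generalizing p with
  | nil => simp [cut, pathFrom, add_assoc]
  | cons v l ih =>
    have := ih (p + v)
    simp only [cut] at this
    simp [cut, pathFrom, this]

theorem push_pathFrom (p : Pt) (P Q : List Pt) (a w : Pt) :
    push (pathFrom p (P ++ a :: w :: Q)) (P.length + 1) = pathFrom p (P ++ w :: a :: Q) := by
  induction P generalizing p with
  | nil =>
    have e : p + (p + a + w) - (p + a) = p + w := by abel
    have e2 : p + a + w = p + w + a := by abel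
    simp only [push, List.nil_append, List.length_nil, zero_add]
    have q1 : pt (pathFrom p (a :: w :: Q)) 1 = p + a := by
      rw [pt_succ_cons _ _ _ 0, pt_zero]
    have q2 : pt (pathFrom p (a :: w :: Q)) (1 + 1) = p + a + w := by
      rw [pt_succ_cons, pt_succ_cons _ _ _ 0, pt_zero]
    rw [q1, q2, Nat.sub_self, pt_zero, e]
    simp [pathFrom, e2]
  | cons v l ih =>
    have := ih (p + v)
    simp only [push] at this ⊢
    rw [List.cons_append, List.length_cons, pt_succ_cons, pt_succ_cons]
    rw [Nat.add_sub_cancel] at this ⊢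
    rw [pt_succ_cons]
    simp [pathFrom, this]

theorem triArea2_pathFrom (p : Pt) (P Q : List Pt) (a w : Pt) :
    triArea2 (pathFrom p (P ++ a :: w :: Q)) (P.length + 1) = (det a w).natAbs := by
  unfold triArea2
  rw [pt_diff _ _ _ (by simp), Nat.add_sub_cancel, pt_diff _ _ _ (by simp)]
  simp

theorem pathFrom_inj {p : Pt} {L L' : List Pt} (h : pathFrom p L = pathFrom p L') : L = L' := by
  induction L generalizing p L' with
  | nil =>
    have := congrArg List.length h
    simp [pathFrom_length] at this
    exact this.symm
  | cons v l ih =>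
    cases L' with
    | nil =>
      have := congrArg List.length h
      simp [pathFrom_length] at this
    | cons v' l' =>
      have h2 : pathFrom (p + v) l = pathFrom (p + v') l' := by simpa [pathFrom] using h
      have h3 : p + v = p + v' := by
        have := congrArg (fun γ => pt γ 0) h2
        simpa [pt_zero] using this
      have h4 : v = v' := add_left_cancel h3
      subst h4
      rw [ih h2]

theorem turn_or (s : ℤ → Prop) (L : List Pt) :
    NoTurn s L ∨ ∃ P a w Q, L = P ++ a :: w :: Q ∧ NoTurn s (P ++ [a]) ∧ s (det a w) := by
  induction L with
  | nil => left; exact List.IsChain.nil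
  | cons v l ih =>
    cases l with
    | nil => left; exact List.IsChain.singleton _
    | cons u l =>
      by_cases hs : s (det v u)
      · right
        exact ⟨[], v, u, l, rfl, List.IsChain.singleton _, hs⟩
      · rcases ih with h | ⟨P, a, w, Q, e, hc, ht⟩
        · left; exact List.IsChain.cons_cons hs h
        · right
          refine ⟨v :: P, a, w, Q, by rw [e]; rfl, ?_, ht⟩
          cases P with
          | nil =>
            simp at e
            obtain ⟨rfl, _⟩ := e
            exact List.IsChain.cons_cons hs (List.IsChain.singleton _)
          | cons b P =>
            simp at e
            obtain ⟨rfl, _⟩ := e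
            exact List.IsChain.cons_cons hs hc

/-- Number of inversions. -/
def inv (s : ℤ → Prop) : List Pt → ℕ
  | [] => 0
  | v :: l => l.countP (fun u => s (det v u)) + inv s l

theorem inv_swap (s : ℤ → Prop) (P Q : List Pt) (a w : Pt) (h : s (det a w))
    (h' : ¬ s (det w a)) : inv s (P ++ a :: w :: Q) = inv s (P ++ w :: a :: Q) + 1 := by
  induction P with
  | nil => simp [inv, h, h']; omega
  | cons v l ih =>
    simp only [List.cons_append, inv, ih]
    have : (l ++ a :: w :: Q).countP (fun u => s (det v u))
        = (l ++ w :: a :: Q).countP (fun u => s (det v u)) := by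
      apply List.Perm.countP_eq
      exact List.Perm.append_left _ (List.Perm.swap _ _ _)
    rw [this]; omega

theorem det_anti (a w : Pt) : det w a = - det a w := by unfold det; ring

theorem step_induction {s : ℤ → Prop} (hs : ∀ z, s z → ¬ s (-z)) (C : List Pt → Prop)
    (H : ∀ L, (∀ P a w Q, L = P ++ a :: w :: Q → s (det a w) →
      C (P ++ (a + w) :: Q) ∧ C (P ++ w :: a :: Q)) → C L) : ∀ L, C L := by
  have key : ∀ N I : ℕ, ∀ L : List Pt, L.length = N → inv s L = I → C L := by
    intro N
    induction N using Nat.strong_induction_on with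
    | _ N ihN =>
      intro I
      induction I using Nat.strong_induction_on with
      | _ I ihI =>
        intro L hL hI
        apply H
        rintro P a w Q rfl ht
        constructor
        · apply ihN _ _ _ _ rfl rfl
          rw [← hL]; simp
        · apply ihI _ _ _ _ rfl
          · rw [← hI, inv_swap s P Q a w ht]
            · omega
            · rw [det_anti]; exact hs _ ht
          · rw [← hL]; simp
  intro L
  exact key _ _ L rfl rfl

section Rel
variable {Δ : Set Pt} {Init : List Pt → Prop} {s : ℤ → Prop}

theorem firstTurn_unique {γ : List Pt} {k k' : ℕ} (h : FirstTurn s γ k) (h' : FirstTurn s γ k') :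
    k = k' := le_antisymm (h.2 _ h'.1) (h'.2 _ h.1)

theorem multRel_unique {γ : List Pt} {m m' : ℕ} (h : MultRel Δ Init s γ m)
    (h' : MultRel Δ Init s γ m') : m = m' := by
  induction h generalizing m' with
  | init hi =>
    cases h' with
    | init _ => rfl
    | noTurn h _ => exact absurd hi h
    | stepIn h => exact absurd hi h
    | stepOut h => exact absurd hi h
  | noTurn hi ht =>
    cases h' with
    | init h => exact absurd h hi
    | noTurn h _ => rfl
    | stepIn h hf => exact absurd hf.1 (ht _)
    | stepOut h hf => exact absurd hf.1 (ht _)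
  | stepIn hi hf hin _ _ ih1 ih2 =>
    cases h' with
    | init h => exact absurd h hi
    | noTurn h ht => exact absurd hf.1 (ht _)
    | stepIn h hf' hin' h1 h2 =>
      obtain rfl := firstTurn_unique hf hf'
      rw [ih1 h1, ih2 h2]
    | stepOut h hf' hin' h1 =>
      obtain rfl := firstTurn_unique hf hf'
      exact absurd hin hin'
  | stepOut hi hf hin _ ih1 =>
    cases h' with
    | init h => exact absurd h hi
    | noTurn h ht => exact absurd hf.1 (ht _)
    | stepIn h hf' hin' h1 h2 =>
      obtain rfl := firstTurn_unique hf hf'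
      exact absurd hin' hin
    | stepOut h hf' hin' h1 =>
      obtain rfl := firstTurn_unique hf hf'
      rw [ih1 h1]

theorem multOf_eq {γ : List Pt} {m : ℕ} (h : MultRel Δ Init s γ m) : multOf Δ Init s γ = m := by
  unfold multOf
  have h' : ∃ m, MultRel Δ Init s γ m := ⟨m, h⟩
  rw [dif_pos h']
  exact multRel_unique h'.choose_spec h

theorem multRel_total (hs : ∀ z, s z → ¬ s (-z)) (p : Pt) :
    ∀ L, ∃ m, MultRel Δ Init s (pathFrom p L) m := by
  apply step_induction hs
  intro L ih
  by_cases hi : Init (pathFrom p L)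
  · exact ⟨1, .init hi⟩
  rcases turn_or s L with h | ⟨P, a, w, Q, rfl, hc, ht⟩
  · exact ⟨0, .noTurn hi (noTurn_turnAt h p)⟩
  · obtain ⟨⟨m1, h1⟩, ⟨m2, h2⟩⟩ := ih P a w Q rfl ht
    have hf := firstTurn_of p (Q := Q) hc ht
    rw [← cut_pathFrom] at h1
    rw [← push_pathFrom] at h2
    by_cases hin : Inside Δ (push (pathFrom p (P ++ a :: w :: Q)) (P.length + 1))
    · exact ⟨_, .stepIn hi hf hin h1 h2⟩
    · exact ⟨_, .stepOut hi hf hin h1⟩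

theorem multRel_multOf (hs : ∀ z, s z → ¬ s (-z)) (p : Pt) (L : List Pt) :
    MultRel Δ Init s (pathFrom p L) (multOf Δ Init s (pathFrom p L)) := by
  obtain ⟨m, h⟩ := multRel_total (Δ := Δ) (Init := Init) hs p L
  rwa [multOf_eq h]

theorem mult_init {γ : List Pt} (h : Init γ) : multOf Δ Init s γ = 1 := multOf_eq (.init h)

theorem mult_noTurn {p : Pt} {L : List Pt} (h : ¬ Init (pathFrom p L)) (ht : NoTurn s L) :
    multOf Δ Init s (pathFrom p L) = 0 := multOf_eq (.noTurn h (noTurn_turnAt ht p))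

theorem mult_in (hs : ∀ z, s z → ¬ s (-z)) {p : Pt} {P Q : List Pt} {a w : Pt}
    (hi : ¬ Init (pathFrom p (P ++ a :: w :: Q))) (hc : NoTurn s (P ++ [a])) (ht : s (det a w))
    (hin : Inside Δ (pathFrom p (P ++ w :: a :: Q))) :
    multOf Δ Init s (pathFrom p (P ++ a :: w :: Q)) =
      (det a w).natAbs * multOf Δ Init s (pathFrom p (P ++ (a + w) :: Q)) +
        multOf Δ Init s (pathFrom p (P ++ w :: a :: Q)) := by
  apply multOf_eq
  have h1 := multRel_multOf (Δ := Δ) (Init := Init) hs p (P ++ (a + w) :: Q)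
  have h2 := multRel_multOf (Δ := Δ) (Init := Init) hs p (P ++ w :: a :: Q)
  have hf := firstTurn_of p (Q := Q) hc ht
  have e := triArea2_pathFrom p P Q a w
  rw [← e]
  apply MultRel.stepIn hi hf
  · rwa [push_pathFrom]
  · rwa [cut_pathFrom]
  · rwa [push_pathFrom]

theorem mult_out (hs : ∀ z, s z → ¬ s (-z)) {p : Pt} {P Q : List Pt} {a w : Pt}
    (hi : ¬ Init (pathFrom p (P ++ a :: w :: Q))) (hc : NoTurn s (P ++ [a])) (ht : s (det a w))
    (hin : ¬ Inside Δ (pathFrom p (P ++ w :: a :: Q))) :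
    multOf Δ Init s (pathFrom p (P ++ a :: w :: Q)) =
      (det a w).natAbs * multOf Δ Init s (pathFrom p (P ++ (a + w) :: Q)) := by
  apply multOf_eq
  have h1 := multRel_multOf (Δ := Δ) (Init := Init) hs p (P ++ (a + w) :: Q)
  have hf := firstTurn_of p (Q := Q) hc ht
  have e := triArea2_pathFrom p P Q a w
  rw [← e]
  apply MultRel.stepOut hi hf
  · rwa [push_pathFrom]
  · rwa [cut_pathFrom]

/-- A class of paths closed under moves and containing no initial path has multiplicity `0`. -/
theorem mult_dead (hs : ∀ z, s z → ¬ s (-z)) (p : Pt) (C : List Pt → Prop)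
    (h1 : ∀ L, C L → ¬ Init (pathFrom p L))
    (h2 : ∀ P a w Q, s (det a w) → C (P ++ a :: w :: Q) →
      C (P ++ (a + w) :: Q) ∧ C (P ++ w :: a :: Q)) :
    ∀ L, C L → multOf Δ Init s (pathFrom p L) = 0 := by
  apply step_induction hs
  intro L ih hL
  rcases turn_or s L with h | ⟨P, a, w, Q, rfl, hc, ht⟩
  · exact mult_noTurn (h1 _ hL) h
  · obtain ⟨i1, i2⟩ := ih P a w Q rfl ht
    obtain ⟨c1, c2⟩ := h2 P a w Q ht hL
    by_cases hin : Inside Δ (pathFrom p (P ++ w :: a :: Q))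
    · rw [mult_in hs (h1 _ hL) hc ht hin, i1 c1, i2 c2, mul_zero]
    · rw [mult_out hs (h1 _ hL) hc ht hin, i1 c1, mul_zero]

end Rel

theorem inside_cons {Δ : Set Pt} {p v : Pt} {l : List Pt} :
    Inside Δ (pathFrom p (v :: l)) ↔ p ∈ Δ ∧ Inside Δ (pathFrom (p + v) l) := by
  simp [Inside, pathFrom]

theorem inside_nil {Δ : Set Pt} {p : Pt} : Inside Δ (pathFrom p []) ↔ p ∈ Δ := by
  simp [Inside, pathFrom]

theorem inside_start {Δ : Set Pt} {p : Pt} {l : List Pt} (h : Inside Δ (pathFrom p l)) :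
    p ∈ Δ := by
  cases l with
  | nil => exact inside_nil.1 h
  | cons v l => exact (inside_cons.1 h).1

theorem inside_append {Δ : Set Pt} {p : Pt} {P l : List Pt} :
    Inside Δ (pathFrom p (P ++ l)) ↔ Inside Δ (pathFrom p P) ∧ Inside Δ (pathFrom (p + P.sum) l) := by
  induction P generalizing p with
  | nil =>
    simp only [List.nil_append, List.sum_nil, add_zero]
    exact ⟨fun h => ⟨inside_nil.2 (inside_start h), h⟩, fun h => h.2⟩
  | cons v P ih =>
    rw [List.cons_append, inside_cons, inside_cons, ih, List.sum_cons, add_assoc, and_assoc]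

theorem inside_swap {Δ : Set Pt} {p : Pt} {P Q : List Pt} {a w : Pt}
    (h : Inside Δ (pathFrom p (P ++ a :: w :: Q))) (hn : p + P.sum + w ∈ Δ) :
    Inside Δ (pathFrom p (P ++ w :: a :: Q)) := by
  rw [inside_append, inside_cons, inside_cons] at h ⊢
  refine ⟨h.1, h.2.1, hn, ?_⟩
  rw [add_right_comm]; exact h.2.2.2

theorem inside_merge {Δ : Set Pt} {p : Pt} {P Q : List Pt} {a w : Pt}
    (h : Inside Δ (pathFrom p (P ++ a :: w :: Q))) :
    Inside Δ (pathFrom p (P ++ (a + w) :: Q)) := by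
  rw [inside_append, inside_cons, inside_cons] at h
  rw [inside_append, inside_cons]
  refine ⟨h.1, h.2.1, ?_⟩
  rw [← add_assoc]; exact h.2.2.2


/-! ## The negative multiplicity -/

/-- The down step of size `x i`. -/
def dn {n : ℕ} (x : Fin n → ℕ) (i : Fin n) : Pt := ((0 : ℤ), -(x i : ℤ))

theorem dSteps_eq (l : List ℕ) : dSteps l = l.map (fun k : ℕ => ((0 : ℤ), -(k : ℤ))) := by
  induction l with
  | nil => rfl
  | cons a l ih => simp [dSteps] at ih ⊢; exact ih

theorem hSteps_eq (l : List ℕ) : hSteps l = l.map (fun k : ℕ => ((k : ℤ), (0 : ℤ))) := by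
  induction l with
  | nil => rfl
  | cons a l ih => simp [hSteps] at ih ⊢; exact ih

/-- Nested determinants. -/
def Phi : List Pt → Pt → ℤ
  | [], _ => 1
  | v :: l, t => -det v (l.sum + t) * Phi l t

theorem Phi_concat (l : List Pt) (u t : Pt) :
    Phi (l ++ [u]) t = Phi l (u + t) * (-det u t) := by
  induction l with
  | nil => simp [Phi]
  | cons v l ih =>
    simp only [List.cons_append, Phi, ih, List.sum_append, List.sum_cons, List.sum_nil, add_zero,
      add_assoc]
    ring

theorem Phi_swap (l m : List Pt) (u v t : Pt) :
    Phi (l ++ u :: v :: m) t = Phi (l ++ v :: u :: m) t + (-det u v) * Phi (l ++ (u + v) :: m) t := by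
  induction l with
  | nil =>
    simp only [List.nil_append, Phi, List.sum_cons, det, Prod.fst_add, Prod.snd_add]
    ring
  | cons w l ih =>
    simp only [List.cons_append, Phi, ih]
    have e : (l ++ u :: v :: m).sum = (l ++ v :: u :: m).sum := by
      simp only [List.sum_append, List.sum_cons]; abel
    have e2 : (l ++ (u + v) :: m).sum = (l ++ v :: u :: m).sum := by
      simp only [List.sum_append, List.sum_cons]; abel
    rw [e, e2]; ring

/-- Vertical steps. -/
def downs (M : List Pt) : List Pt := M.filter (fun v => v.1 = 0)
/-- Non-vertical steps. -/
def ups (M : List Pt) : List Pt := M.filter (fun v => ¬ v.1 = 0)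

theorem downs_append (M N : List Pt) : downs (M ++ N) = downs M ++ downs N := by simp [downs]
theorem ups_append (M N : List Pt) : ups (M ++ N) = ups M ++ ups N := by simp [ups]
theorem downs_cons_down {v : Pt} (h : v.1 = 0) (M : List Pt) : downs (v :: M) = v :: downs M := by
  simp [downs, h]
theorem downs_cons_up {v : Pt} (h : v.1 ≠ 0) (M : List Pt) : downs (v :: M) = downs M := by
  simp [downs, h]
theorem ups_cons_down {v : Pt} (h : v.1 = 0) (M : List Pt) : ups (v :: M) = ups M := by
  simp [ups, h]
theorem ups_cons_up {v : Pt} (h : v.1 ≠ 0) (M : List Pt) : ups (v :: M) = v :: ups M := by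
  simp [ups, h]

/-- Admissible step: down, or right with nonnegative height. -/
def Nice (v : Pt) : Prop := 0 ≤ v.1 ∧ (v.1 = 0 → v.2 < 0) ∧ (0 < v.1 → 0 ≤ v.2)

theorem sum_ge_downs {M : List Pt} (h : ∀ v ∈ M, Nice v) : (downs M).sum.2 ≤ M.sum.2 := by
  induction M with
  | nil => simp [downs]
  | cons v M ih =>
    have ih := ih (fun u hu => h u (List.mem_cons_of_mem _ hu))
    have hv := h v List.mem_cons_self
    by_cases h0 : v.1 = 0
    · rw [downs_cons_down h0]; simp; exact ih
    · rw [downs_cons_up h0]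
      have := hv.2.2 (lt_of_le_of_ne hv.1 (Ne.symm h0))
      simp; omega

theorem downs_sum_le {M : List Pt} (h : ∀ v ∈ M, Nice v) : (downs M).sum.2 ≤ 0 := by
  induction M with
  | nil => simp [downs]
  | cons v M ih =>
    have ih := ih (fun u hu => h u (List.mem_cons_of_mem _ hu))
    have hv := h v List.mem_cons_self
    by_cases h0 : v.1 = 0
    · rw [downs_cons_down h0]; have := hv.2.1 h0; simp; omega
    · rw [downs_cons_up h0]; exact ih

theorem sum_fst_nonneg {M : List Pt} (h : ∀ v ∈ M, Nice v) : 0 ≤ M.sum.1 := by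
  induction M with
  | nil => simp
  | cons v M ih =>
    have ih := ih (fun u hu => h u (List.mem_cons_of_mem _ hu))
    have hv := h v List.mem_cons_self
    have := hv.1
    simp; omega

theorem hs_neg : ∀ z : ℤ, (fun x : ℤ => x < 0) z → ¬ (fun x : ℤ => x < 0) (-z) := by
  intro z h; simp only at h ⊢; omega
theorem hs_pos : ∀ z : ℤ, (fun x : ℤ => 0 < x) z → ¬ (fun x : ℤ => 0 < x) (-z) := by
  intro z h; simp only at h ⊢; omega

/-- no right turns -/
abbrev NR (L : List Pt) : Prop := NoTurn (fun x => x < 0) L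

theorem chain_zero {N : List Pt} : ∀ {u : Pt}, NR (N ++ [u]) → (∀ v ∈ N ++ [u], Nice v ∧ 0 < v.1) →
    u.2 = 0 → ∀ v ∈ N, v.2 = 0 := by
  induction N using List.reverseRecOn with
  | nil => simp
  | append_singleton N w ih =>
    intro u hc hn hu v hv
    have hc' : NR (N ++ [w]) := by
      unfold NR NoTurn at hc ⊢; exact hc.left_of_append
    have hw : w.2 = 0 := by
      unfold NR NoTurn at hc
      rw [List.append_assoc] at hc
      have h2 := hc.right_of_append
      simp [det] at h2
      have a1 := hn w (by simp)
      have a2 := hn u (by simp)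
      have := a1.1.2.2 a1.2
      rw [hu] at h2
      nlinarith [a2.2]
    rcases List.mem_append.1 hv with h | h
    · exact ih hc' (fun v hv => hn v (List.mem_append_left _ hv)) hw v h
    · simp at h; rw [h]; exact hw

theorem chain_ups {M : List Pt} : ∀ {v : Pt}, NR (v :: M) → (∀ u ∈ v :: M, Nice u) → v.1 ≠ 0 →
    ∀ u ∈ M, u.1 ≠ 0 := by
  induction M with
  | nil => simp
  | cons w M ih =>
    intro v hc hn hv
    have hw : w.1 ≠ 0 := by
      intro h0
      have h1 := hn v (by simp)
      have h2 := (hn w (by simp)).2.1 h0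
      unfold NR NoTurn at hc
      rw [List.isChain_cons_cons] at hc
      apply hc.1
      simp only [det, h0]
      have : 0 < v.1 := lt_of_le_of_ne h1.1 (Ne.symm hv)
      nlinarith
    have hc' : NR (w :: M) := by
      unfold NR NoTurn at hc ⊢
      rw [List.isChain_cons_cons] at hc
      exact hc.2
    have := ih hc' (fun u hu => hn u (List.mem_cons_of_mem _ hu)) hw
    intro u hu
    rcases List.mem_cons.1 hu with rfl | hu
    · exact hw
    · exact this u hu

theorem chain_split {M : List Pt} (hc : NR M) (hn : ∀ u ∈ M, Nice u) : M = downs M ++ ups M := by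
  induction M with
  | nil => rfl
  | cons v M ih =>
    by_cases hv : v.1 = 0
    · rw [downs_cons_down hv, ups_cons_down hv, List.cons_append,
        ← ih (List.IsChain.of_cons hc) (fun u hu => hn u (List.mem_cons_of_mem _ hu))]
    · have h := chain_ups hc hn hv
      have e1 : downs M = [] := by
        unfold downs; rw [List.filter_eq_nil_iff]; simpa using fun a b hab => h (a, b) hab
      have e2 : ups M = M := by
        unfold ups; rw [List.filter_eq_self]; simpa using fun a b hab => h (a, b) hab
      rw [downs_cons_up hv, ups_cons_up hv, e1, e2]; rfl

section Minus
variable {n : ℕ} (x : Fin n → ℕ) (c : ℕ)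

/-- initial paths, specialised -/
abbrev IM : List Pt → Prop := InitMinusRect (∑ i, x i) {c} ((List.ofFn x : List ℕ) : Multiset ℕ)

/-- negative multiplicity, as a function of steps -/
abbrev MM (L : List Pt) : ℕ := multOf (rect c (∑ i, x i)) (IM x c) (fun x => x < 0)
  (pathFrom (0, ((∑ i, x i : ℕ) : ℤ)) L)

theorem IM_iff (L : List Pt) : IM x c (pathFrom (0, ((∑ i, x i : ℕ) : ℤ)) L) ↔
    ∃ s : List ℕ, (s : Multiset ℕ) = ((List.ofFn x : List ℕ) : Multiset ℕ) ∧
      L = dSteps s ++ [((c : ℤ), 0)] := by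
  constructor
  · rintro ⟨s, t, hs, ht, h⟩
    refine ⟨s, hs, ?_⟩
    have : t = [c] := by simpa using ht
    subst this
    exact pathFrom_inj h
  · rintro ⟨s, hs, rfl⟩
    exact ⟨s, [c], hs, rfl, rfl⟩

theorem MM_dead (i : Fin n) (L : List Pt) (h1 : ∀ v ∈ L, 0 ≤ v.1) (h2 : dn x i ∉ L) :
    MM x c L = 0 := by
  apply mult_dead hs_neg _ (fun L => (∀ v ∈ L, 0 ≤ v.1) ∧ dn x i ∉ L) _ _ L ⟨h1, h2⟩
  · rintro L ⟨_, hL⟩ hi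
    rw [IM_iff] at hi
    obtain ⟨s, hs, rfl⟩ := hi
    apply hL
    have : x i ∈ (s : Multiset ℕ) := by rw [hs]; simp [List.mem_ofFn]
    simp only [List.mem_append]
    left
    rw [dSteps_eq]; unfold dn
    exact List.mem_map.2 ⟨x i, by simpa using this, rfl⟩
  · rintro P a w Q ht ⟨g1, g2⟩
    simp only [List.mem_append, List.mem_cons, not_or] at g1 g2 ⊢
    have ga := g1 a (by simp)
    have gw := g1 w (by simp)
    refine ⟨⟨?_, g2.1, ?_, g2.2.2.2⟩, ?_, g2.1, g2.2.2.1, g2.2.1, g2.2.2.2⟩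
    · rintro v (h | rfl | h)
      · exact g1 v (by simp [h])
      · simp; omega
      · exact g1 v (by simp [h])
    · intro h
      have h0 : a.1 + w.1 = 0 := by
        have := congrArg Prod.fst h
        simpa [dn] using this.symm
      have ha : a.1 = 0 := by omega
      have hw : w.1 = 0 := by omega
      simp [det, ha, hw] at ht
    · rintro v (h | rfl | rfl | h)
      · exact g1 v (by simp [h])
      · exact gw
      · exact ga
      · exact g1 v (by simp [h])

theorem dSteps_of {D : List Pt} (hD : (D : Multiset Pt) = (Finset.univ : Finset (Fin n)).val.map (dn x)) :
    ∃ s : List ℕ, (s : Multiset ℕ) = ((List.ofFn x : List ℕ) : Multiset ℕ) ∧ D = dSteps s := by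
  refine ⟨D.map (fun v => (-v.2).toNat), ?_, ?_⟩
  · rw [← Multiset.map_coe, hD, Multiset.map_map]
    have : (fun v : Pt => (-v.2).toNat) ∘ dn x = x := by
      funext i; simp [dn]
    rw [this]
    have h2 : (Finset.univ : Finset (Fin n)).val = (List.finRange n : Multiset (Fin n)) := rfl
    rw [h2, Multiset.map_coe, List.ofFn_eq_map]
  · rw [dSteps_eq, List.map_map]
    symm
    conv_rhs => rw [← List.map_id D]
    apply List.map_congr_left
    intro v hv
    have : v ∈ (D : Multiset Pt) := hv
    rw [hD, Multiset.mem_map] at this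
    obtain ⟨i, _, rfl⟩ := this
    simp [dn]

theorem D_sum {D : List Pt} (hD : (D : Multiset Pt) = (Finset.univ : Finset (Fin n)).val.map (dn x)) :
    D.sum = (0, -((∑ i, x i : ℕ) : ℤ)) := by
  have : D.sum = ∑ i, dn x i := by
    rw [← Multiset.sum_coe, hD]; rfl
  rw [this]
  ext <;> simp [dn, Prod.fst_sum, Prod.snd_sum]

theorem not_IM_of_two {L : List Pt} (h : 2 ≤ (ups L).length) :
    ¬ IM x c (pathFrom (0, ((∑ i, x i : ℕ) : ℤ)) L) := by
  rw [IM_iff]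
  rintro ⟨s, _, rfl⟩
  have : ups (dSteps s) = [] := by
    rw [dSteps_eq]; unfold ups; rw [List.filter_eq_nil_iff]; simp
  rw [ups_append, this] at h
  simp only [List.nil_append] at h
  have h2 : (ups [((c : ℤ), (0 : ℤ))]).length ≤ 1 := by
    unfold ups; exact List.length_filter_le _ _
  omega

theorem ups_self {N : List Pt} (h : ∀ v ∈ N, 0 < v.1) : ups N = N := by
  unfold ups; rw [List.filter_eq_self]; intro v hv; have := h v hv; simp; omega

theorem chain_downs (D : List Pt) (h : ∀ v ∈ D, v.1 = 0) (s : ℤ → Prop) (h0 : ¬ s 0) :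
    NoTurn s D := by
  unfold NoTurn
  rw [List.isChain_iff_getElem]
  intro i hi
  have h1 := h _ (List.getElem_mem (l := D) (n := i) (by omega))
  have h2 := h _ (List.getElem_mem (l := D) (n := i + 1) (by omega))
  simp [det, h1, h2, h0]

theorem MM_phase2 (D : List Pt)
    (hD : (D : Multiset Pt) = (Finset.univ : Finset (Fin n)).val.map (dn x)) (N : List Pt) :
    ∀ t : Pt, (∀ v ∈ N, Nice v ∧ 0 < v.1) → NR (D ++ N) → 0 < t.1 → N.sum + t = ((c : ℤ), 0) →
      (MM x c (D ++ N ++ [t]) : ℤ) = Phi N t := by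
  induction N using List.reverseRecOn with
  | nil =>
    intro t _ _ ht hsum
    simp at hsum
    subst hsum
    obtain ⟨s, hs, rfl⟩ := dSteps_of x hD
    have : IM x c (pathFrom (0, ((∑ i, x i : ℕ) : ℤ)) (dSteps s ++ [] ++ [((c : ℤ), 0)])) := by
      rw [IM_iff]; exact ⟨s, hs, by simp⟩
    unfold MM
    rw [mult_init this]; simp [Phi]
  | append_singleton N u ih =>
    intro t hN hch ht hsum
    have hu := hN u (by simp)
    have hu2 := hu.1.2.2 hu.2
    have hni : ¬ IM x c (pathFrom (0, ((∑ i, x i : ℕ) : ℤ)) (D ++ (N ++ [u]) ++ [t])) := by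
      apply not_IM_of_two
      have e : ups (D ++ (N ++ [u]) ++ [t]) = ups D ++ (N ++ [u]) ++ [t] := by
        rw [ups_append, ups_append, ups_self (N := [t]) (by simpa using ht),
          ups_self (fun v hv => (hN v hv).2)]
      rw [e]; simp; omega
    have hsum2 : N.sum.2 + u.2 + t.2 = 0 := by
      have := congrArg Prod.snd hsum
      simpa [List.sum_append] using this
    have hsum1 : N.sum.1 + u.1 + t.1 = c := by
      have := congrArg Prod.fst hsum
      simpa [List.sum_append] using this
    have hNnn : ∀ N : List Pt, (∀ v ∈ N, Nice v ∧ 0 < v.1) → 0 ≤ N.sum.2 := by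
      intro N hN
      induction N with
      | nil => simp
      | cons a N ih' =>
        have := ih' (fun v hv => hN v (List.mem_cons_of_mem _ hv))
        have ha := hN a (by simp)
        have := ha.1.2.2 ha.2
        simp; omega
    have hN0 := hNnn N (fun v hv => hN v (List.mem_append_left _ hv))
    rw [Phi_concat]
    by_cases hu0 : u.2 = 0
    · have hz := chain_zero (N := N) (u := u) (by unfold NR NoTurn at hch ⊢; exact hch.right_of_append) hN hu0
      have hz2 : N.sum.2 = 0 := by
        clear * - hz
        induction N with
        | nil => simp
        | cons a N ih =>
          have h1 := hz a (by simp)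
          have h2 := ih (fun v hv => hz v (List.mem_cons_of_mem _ hv))
          simp [h1, h2]
      have ht0 : t.2 = 0 := by omega
      have hdet : det u t = 0 := by simp [det, ht0, hu0]
      have hnt : NR (D ++ (N ++ [u]) ++ [t]) := by
        unfold NR NoTurn
        have e : D ++ (N ++ [u]) ++ [t] = (D ++ N) ++ u :: t :: [] := by simp
        rw [e, List.isChain_append_cons_cons]
        refine ⟨?_, ?_, List.IsChain.singleton _⟩
        · rw [List.append_assoc]; exact hch
        · rw [hdet]; simp
      unfold MM
      rw [mult_noTurn hni hnt, hdet]; simp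
    · have hupos : 0 < u.2 := by omega
      have e : D ++ (N ++ [u]) ++ [t] = (D ++ N) ++ u :: t :: [] := by simp
      have hdet : det u t < 0 := by
        unfold det; nlinarith [hu.2]
      have hout : ¬ Inside (rect c (∑ i, x i))
          (pathFrom (0, ((∑ i, x i : ℕ) : ℤ)) ((D ++ N) ++ t :: u :: [])) := by
        rw [inside_append, inside_cons]
        rintro ⟨_, _, h⟩
        have := inside_start h
        have h3 := this.2.2.1
        rw [List.sum_append, D_sum x hD] at h3
        simp at h3
        omega
      unfold MM
      rw [e] at hni ⊢
      rw [mult_out hs_neg hni (by rw [List.append_assoc]; exact hch) hdet hout]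
      have hih := ih (u + t) (fun v hv => hN v (List.mem_append_left _ hv))
        (by unfold NR NoTurn at hch ⊢; rw [← List.append_assoc] at hch; exact hch.left_of_append)
        (by simp; have := hu.2; omega) (by rw [← hsum, List.sum_append]; simp [add_assoc])
      unfold MM at hih
      rw [Nat.cast_mul, Int.natCast_natAbs, hih]
      have : |det u t| = - det u t := abs_of_neg hdet
      rw [this]; ring

end Minus

section Minus2
variable {n : ℕ} (x : Fin n → ℕ) (c : ℕ)

/-- Phase 1 of the negative recursion. -/
structure Ph1 (M : List Pt) : Prop where
  nice : ∀ v ∈ M, Nice v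
  dperm : (downs M : Multiset Pt) = (Finset.univ : Finset (Fin n)).val.map (dn x)
  usum : (ups M).sum = ((c : ℤ), ((∑ i, x i : ℕ) : ℤ))
  hd : ∃ h M', M = h :: M' ∧ h.1 = 0
  ins : Inside (rect c (∑ i, x i)) (pathFrom (0, ((∑ i, x i : ℕ) : ℤ))
    (M ++ [(0, -((∑ i, x i : ℕ) : ℤ))]))

theorem not_IM_end (hc : 0 < c) (M : List Pt) (a : ℤ) :
    ¬ IM x c (pathFrom (0, ((∑ i, x i : ℕ) : ℤ)) (M ++ [((0 : ℤ), a)])) := by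
  rw [IM_iff]
  rintro ⟨s, _, h⟩
  have := (List.append_inj' h rfl).2
  simp at this
  omega

theorem MM_phase1 (hc : 0 < c) (hd : 0 < ∑ i, x i) (hx : Function.Injective x) :
    ∀ M, Ph1 x c M →
    (MM x c (M ++ [(0, -((∑ i, x i : ℕ) : ℤ))]) : ℤ)
      = Phi (ups M) (0, -((∑ i, x i : ℕ) : ℤ)) := by
  apply step_induction hs_neg
  intro M ih hM
  have hd' : (0 : ℤ) < ((∑ i, x i : ℕ) : ℤ) := by exact_mod_cast hd
  have hDs := D_sum x hM.dperm
  have hinj : Function.Injective (dn x) := by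
    intro i j hij
    apply hx
    have := congrArg Prod.snd hij
    simpa [dn] using this
  have hnd : (downs M).Nodup := by
    rw [← Multiset.coe_nodup, hM.dperm]
    exact Multiset.Nodup.map hinj Finset.univ.nodup
  generalize hdd : ((∑ i, x i : ℕ) : ℤ) = d at *
  rcases turn_or (fun x => x < 0) M with hch | ⟨P, a, w, Q, rfl, hch, ht⟩
  · -- no turn inside
    have hsp := chain_split hch hM.nice
    have hune : ups M ≠ [] := by
      intro h
      have := hM.usum
      rw [h] at this
      have := congrArg Prod.fst this
      simp at this; omega
    obtain ⟨N, u, hNu⟩ : ∃ N u, ups M = N ++ [u] := by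
      rcases List.eq_nil_or_concat (ups M) with h | ⟨N, u, h⟩
      · exact absurd h hune
      · exact ⟨N, u, by simpa using h⟩
    have hnice : ∀ v ∈ N ++ [u], Nice v ∧ 0 < v.1 := by
      intro v hv
      rw [← hNu] at hv
      unfold ups at hv
      rw [List.mem_filter] at hv
      have h1 := hM.nice v hv.1
      refine ⟨h1, ?_⟩
      have h2 : v.1 ≠ 0 := by simpa using hv.2
      exact lt_of_le_of_ne h1.1 (Ne.symm h2)
    have hu := hnice u (by simp)
    have hu2 := hu.1.2.2 hu.2
    have hchs : NR (downs M ++ (N ++ [u])) := by rw [← hNu, ← hsp]; exact hch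
    have husum : N.sum + u = ((c : ℤ), d) := by
      have := hM.usum
      rw [hNu, hdd, List.sum_append] at this
      simpa using this
    have hupos : 0 < u.2 := by
      by_contra h0
      have hu0 : u.2 = 0 := by omega
      have hz := chain_zero (N := N) (u := u)
        (by unfold NR NoTurn at hchs ⊢; exact hchs.right_of_append) hnice hu0
      have hz2 : N.sum.2 = 0 := by
        clear * - hz
        induction N with
        | nil => simp
        | cons a N ih =>
          have h1 := hz a (by simp)
          have h2 := ih (fun v hv => hz v (List.mem_cons_of_mem _ hv))
          simp [h1, h2]
      have := congrArg Prod.snd husum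
      simp at this
      omega
    have e : M ++ [((0 : ℤ), -d)] = (downs M ++ N) ++ u :: (0, -d) :: [] := by
      conv_lhs => rw [hsp, hNu]
      simp
    have hdet : det u (0, -d) < 0 := by
      simp only [det]; nlinarith [hu.2]
    have hout : ¬ Inside (rect c (∑ i, x i))
        (pathFrom (0, d) ((downs M ++ N) ++ (0, -d) :: u :: [])) := by
      rw [inside_append, inside_cons]
      rintro ⟨_, _, h⟩
      have := inside_start h
      have h3 := this.2.2.1
      rw [List.sum_append, hDs] at h3
      have h4 := congrArg Prod.snd husum
      simp at h3 h4
      omega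
    have hni := not_IM_end x c hc M (-d)
    rw [hdd] at hni
    unfold MM
    rw [hdd]
    rw [e] at hni ⊢
    rw [mult_out hs_neg hni (by rw [List.append_assoc]; exact hchs) hdet hout]
    have hp2 := MM_phase2 x c (downs M) hM.dperm N (u + (0, -d))
      (fun v hv => hnice v (List.mem_append_left _ hv))
      (by unfold NR NoTurn at hchs ⊢; rw [← List.append_assoc] at hchs; exact hchs.left_of_append)
      (by simpa using hu.2)
      (by rw [← add_assoc, husum]; simp)
    unfold MM at hp2
    rw [hdd] at hp2
    rw [Nat.cast_mul, Int.natCast_natAbs, hp2, hNu, Phi_concat, abs_of_neg hdet]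
    ring
  · -- turn inside
    have na := hM.nice a (by simp)
    have nw := hM.nice w (by simp)
    have ha : a.1 ≠ 0 := by
      intro h0
      have := na.2.1 h0
      simp only [det, h0] at ht
      nlinarith [nw.1]
    have hapos : 0 < a.1 := lt_of_le_of_ne na.1 (Ne.symm ha)
    have ha2 := na.2.2 hapos
    obtain ⟨h, M', hhM, hh0⟩ := hM.hd
    obtain ⟨P', rfl⟩ : ∃ P', P = h :: P' := by
      cases P with
      | nil => simp at hhM; rw [hhM.1] at ha; exact absurd hh0 ha
      | cons b P' => simp at hhM; exact ⟨P', by rw [hhM.1]⟩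
    set P := h :: P' with hP
    have hni := not_IM_end x c hc (P ++ a :: w :: Q) (-d)
    rw [hdd] at hni
    have e1 : ∀ L, (P ++ a :: w :: Q) ++ L = P ++ a :: w :: (Q ++ L) := by simp
    have e2 : ∀ L, (P ++ w :: a :: Q) ++ L = P ++ w :: a :: (Q ++ L) := by simp
    have e3 : ∀ L, (P ++ (a + w) :: Q) ++ L = P ++ (a + w) :: (Q ++ L) := by simp
    have hins := hM.ins
    rw [hdd] at hins
    rw [e1] at hins
    have hq := (inside_append.1 hins).2
    rw [inside_cons, inside_cons] at hq
    obtain ⟨q1, q2, q3⟩ := hq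
    have q3 := inside_start q3
    have hnP : ∀ v ∈ P, Nice v := fun v hv => hM.nice v (by simp [hv])
    have hnQ : ∀ v ∈ Q, Nice v := fun v hv => hM.nice v (by simp [hv])
    have hiw : Inside (rect c (∑ i, x i)) (pathFrom (0, d) (P ++ w :: a :: (Q ++ [(0, -d)]))) := by
      apply inside_swap hins
      have k1 := q1.1
      have k2 := q3.2.1
      have k3 := q1.2.2.1
      have k4 := q1.2.2.2
      have k5 := q3.2.2.2
      rw [hdd] at k4 k5
      simp at k1 k2 k3 k4 k5
      have k6 := nw.1
      have goal4 : 0 ≤ d + P.sum.2 + w.2 := by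
        by_cases hw : w.1 = 0
        · have g1 := sum_ge_downs hnP
          have g2 := downs_sum_le hnQ
          have g3 := congrArg Prod.snd hDs
          rw [downs_append, downs_cons_up ha, downs_cons_down hw] at g3
          simp at g3
          omega
        · have := nw.2.2 (lt_of_le_of_ne nw.1 (Ne.symm hw))
          omega
      have goal5 : P.sum.2 + w.2 ≤ 0 := by omega
      refine ⟨?_, ?_, ?_, ?_⟩ <;> simp
      · omega
      · omega
      · omega
      · rw [show (∑ i, (x i : ℤ)) = d by rw [← hdd]; push_cast; rfl]; omega
    have hmem : ∀ v, v ∈ P ++ w :: a :: Q ↔ v ∈ P ++ a :: w :: Q := by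
      intro v; simp; tauto
    have hS : (w.1 = 0 → (ups (P ++ w :: a :: Q)) = ups (P ++ a :: w :: Q)) := by
      intro hw
      simp only [ups_append, ups_cons_down hw, ups_cons_up ha]
    have hPhs : Ph1 x c (P ++ w :: a :: Q) := by
      refine ⟨fun v hv => hM.nice v ((hmem v).1 hv), ?_, ?_, ⟨h, P' ++ w :: a :: Q, rfl, hh0⟩, ?_⟩
      · rw [← hM.dperm, Multiset.coe_eq_coe]
        unfold downs
        exact (List.Perm.append_left _ (List.Perm.swap _ _ _)).filter _
      · rw [← hM.usum]
        apply List.Perm.sum_eq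
        unfold ups
        exact (List.Perm.append_left _ (List.Perm.swap _ _ _)).filter _
      · rw [hdd, e2]; exact hiw
    obtain ⟨ih1, ih2⟩ := ih P a w Q rfl ht
    have ih2 := ih2 hPhs
    unfold MM at ih1 ih2 ⊢
    rw [hdd] at ih1 ih2 ⊢
    rw [e1] at hni ⊢
    rw [mult_in hs_neg hni hch ht hiw]
    rw [e2] at ih2
    rw [e3] at ih1
    rw [Nat.cast_add, Nat.cast_mul, ih2, Int.natCast_natAbs, abs_of_neg ht]
    by_cases hw : w.1 = 0
    · -- the merge is dead
      have hwm : w ∈ downs (P ++ a :: w :: Q) := by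
        unfold downs; simp [hw]
      have hwm' : w ∈ (Finset.univ : Finset (Fin n)).val.map (dn x) := by
        rw [← hM.dperm]; exact hwm
      obtain ⟨i, _, hi⟩ := Multiset.mem_map.1 hwm'
      have hdead := MM_dead x c i (P ++ (a + w) :: (Q ++ [(0, -d)]))
        (by
          intro v hv
          simp only [List.mem_append, List.mem_cons, List.not_mem_nil, or_false] at hv
          rcases hv with hv | rfl | hv | rfl
          · exact (hnP v hv).1
          · have := nw.1; simp; omega
          · exact (hnQ v hv).1
          · simp)
        (by
          rw [hi]
          rw [downs_append, downs_cons_up ha, downs_cons_down hw] at hnd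
          have hnd2 := List.nodup_middle.1 hnd
          rw [List.nodup_cons] at hnd2
          intro hv
          simp only [List.mem_append, List.mem_cons, List.not_mem_nil, or_false] at hv
          rcases hv with hv | hv | hv | hv
          · apply hnd2.1
            apply List.mem_append_left
            unfold downs; rw [List.mem_filter]; exact ⟨hv, by simpa using hw⟩
          · have := congrArg Prod.fst hv
            simp at this; exact ha this
          · apply hnd2.1
            apply List.mem_append_right
            unfold downs; rw [List.mem_filter]; exact ⟨hv, by simpa using hw⟩
          · have g1 := downs_sum_le (M := P') (fun v hv => hnP v (by simp [hP, hv]))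
            have g2 := downs_sum_le hnQ
            have g3 := congrArg Prod.snd hDs
            rw [downs_append, downs_cons_up ha, downs_cons_down hw, hP, downs_cons_down hh0] at g3
            have g4 := (hnP h (by simp [hP])).2.1 hh0
            rw [hv] at g3
            simp at g3
            omega)
      unfold MM at hdead
      rw [hdd] at hdead
      rw [hdead, hS hw]; simp
    · have hwpos : 0 < w.1 := lt_of_le_of_ne nw.1 (Ne.symm hw)
      have hw2 := nw.2.2 hwpos
      have haw : (a + w).1 ≠ 0 := by simp; omega
      have ih1 := ih1 (by
        refine ⟨?_, ?_, ?_, ⟨h, P' ++ (a + w) :: Q, rfl, hh0⟩, ?_⟩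
        · intro v hv
          simp only [List.mem_append, List.mem_cons] at hv
          rcases hv with hv | rfl | hv
          · exact hnP v hv
          · refine ⟨?_, ?_, ?_⟩ <;> simp <;> omega
          · exact hnQ v hv
        · rw [← hM.dperm]
          simp only [downs_append, downs_cons_up haw, downs_cons_up ha, downs_cons_up hw]
        · rw [← hM.usum]
          simp only [ups_append, ups_cons_up haw, ups_cons_up ha, ups_cons_up hw, List.sum_append,
            List.sum_cons, add_assoc]
        · rw [hdd, e3]; exact inside_merge hins)
      rw [ih1]
      simp only [ups_append, ups_cons_up haw, ups_cons_up ha, ups_cons_up hw]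
      rw [Phi_swap (ups P) (ups Q) a w]
      ring

end Minus2

/-! ## The positive multiplicity -/
section Plus
variable {n : ℕ} (x : Fin n → ℕ) (c : ℕ)

/-- initial paths, specialised -/
abbrev IP : List Pt → Prop :=
  InitPlusRect (∑ i, x i) (Multiset.replicate c 1) {∑ i, x i}

/-- positive multiplicity, as a function of steps -/
abbrev PP (L : List Pt) : ℕ := multOf (rect c (∑ i, x i)) (IP x c) (fun x => 0 < x)
  (pathFrom (0, ((∑ i, x i : ℕ) : ℤ)) L)

theorem IP_iff (L : List Pt) : IP x c (pathFrom (0, ((∑ i, x i : ℕ) : ℤ)) L) ↔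
    L = List.replicate c ((1 : ℤ), (0 : ℤ)) ++ [((0 : ℤ), -((∑ i, x i : ℕ) : ℤ))] := by
  constructor
  · rintro ⟨s, t, hs, ht, h⟩
    have : t = [∑ i, x i] := by simpa using ht
    subst this
    have : s = List.replicate c 1 := by
      rw [← Multiset.coe_replicate, Multiset.coe_eq_coe] at hs
      exact List.perm_replicate.1 hs
    subst this
    have h := pathFrom_inj h
    rw [h, hSteps_eq, dSteps_eq]; simp
  · rintro rfl
    refine ⟨List.replicate c 1, [∑ i, x i], Multiset.coe_replicate c 1, by simp, ?_⟩
    rw [hSteps_eq, dSteps_eq]; simp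

/-- no left turns -/
abbrev NL (L : List Pt) : Prop := NoTurn (fun x => 0 < x) L

theorem NL_flat (k : ℕ) (D : List Pt) (h : ∀ v ∈ D, v.1 = 0 ∧ v.2 ≤ 0) :
    NL (List.replicate k ((1 : ℤ), (0 : ℤ)) ++ D) := by
  induction k with
  | zero => simpa using chain_downs D (fun v hv => (h v hv).1) _ (by simp)
  | succ k ih =>
    rw [List.replicate_succ, List.cons_append]
    unfold NL NoTurn at ih ⊢
    rw [List.isChain_cons]
    refine ⟨?_, ih⟩
    intro y hy
    have hm := List.mem_of_mem_head? hy
    rw [List.mem_append] at hm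
    rcases hm with hm | hm
    · rw [List.mem_replicate] at hm
      rw [hm.2]; simp [det]
    · simp [det]; exact (h y hm).2

theorem IP_noTurn {L : List Pt} (h : IP x c (pathFrom (0, ((∑ i, x i : ℕ) : ℤ)) L)) : NL L := by
  rw [IP_iff] at h
  rw [h]
  apply NL_flat
  intro v hv
  simp only [List.mem_singleton] at hv
  subst hv
  simp
  exact Finset.sum_nonneg (fun i _ => by positivity)

theorem not_IP_turn {P Q : List Pt} {a w : Pt} (h : 0 < det a w) :
    ¬ IP x c (pathFrom (0, ((∑ i, x i : ℕ) : ℤ)) (P ++ a :: w :: Q)) := by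
  intro hi
  have := IP_noTurn x c hi
  unfold NL NoTurn at this
  rw [List.isChain_append_cons_cons] at this
  exact this.2.1 h

/-- Certainly dead step lists. -/
def SD (L : List Pt) : Prop :=
  (∀ v ∈ L, 0 ≤ v.1 ∧ (v.1 = 0 → v.2 ≤ 0)) ∧
  ((ups L).length < c ∨ ((ups L).length ≤ c ∧ ∃ v ∈ L, v.1 ≠ 0 ∧ v.2 < 0))

theorem PP_dead (L : List Pt) (h : SD c L) : PP x c L = 0 := by
  apply mult_dead hs_pos _ (SD c) _ _ L h
  · rintro L ⟨_, hL⟩ hi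
    rw [IP_iff] at hi
    subst hi
    rcases hL with hL | ⟨_, v, hv, h1, h2⟩
    · rw [ups_append, ups_self (N := List.replicate c ((1 : ℤ), (0 : ℤ)))] at hL
      · simp at hL
      · intro v hv
        rw [(List.mem_replicate.1 hv).2]; simp
    · rw [List.mem_append, List.mem_replicate, List.mem_singleton] at hv
      rcases hv with hv | hv
      · rw [hv.2] at h2; simp at h2
      · rw [hv] at h1; simp at h1
  · rintro P a w Q ht ⟨g1, g2⟩
    have ga := g1 a (by simp)
    have gw := g1 w (by simp)
    constructor
    · refine ⟨?_, ?_⟩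
      · intro v hv
        simp only [List.mem_append, List.mem_cons] at hv
        rcases hv with hv | rfl | hv
        · exact g1 v (by simp [hv])
        · refine ⟨by simp; omega, ?_⟩
          intro h0
          simp at h0 ⊢
          have := ga.2 (by omega)
          have := gw.2 (by omega)
          omega
        · exact g1 v (by simp [hv])
      · by_cases ha : a.1 = 0
        · by_cases hw : w.1 = 0
          · simp [det, ha, hw] at ht
          · have haw : (a + w).1 ≠ 0 := by simpa [ha] using hw
            have e : (ups (P ++ (a + w) :: Q)).length = (ups (P ++ a :: w :: Q)).length := by
              simp [ups_append, ups_cons_up haw, ups_cons_down ha, ups_cons_up hw]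
            rw [e]
            rcases g2 with g2 | ⟨g2, v, hv, h1, h2⟩
            · left; exact g2
            · right
              refine ⟨g2, ?_⟩
              simp only [List.mem_append, List.mem_cons] at hv
              rcases hv with hv | rfl | rfl | hv
              · exact ⟨v, by simp [hv], h1, h2⟩
              · exact absurd ha h1
              · refine ⟨a + v, by simp, haw, ?_⟩
                have := ga.2 ha
                simp; omega
              · exact ⟨v, by simp [hv], h1, h2⟩
        · by_cases hw : w.1 = 0
          · have haw : (a + w).1 ≠ 0 := by simpa [hw] using ha
            have e : (ups (P ++ (a + w) :: Q)).length = (ups (P ++ a :: w :: Q)).length := by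
              simp [ups_append, ups_cons_up haw, ups_cons_down hw, ups_cons_up ha]
            rw [e]
            rcases g2 with g2 | ⟨g2, v, hv, h1, h2⟩
            · left; exact g2
            · right
              refine ⟨g2, ?_⟩
              simp only [List.mem_append, List.mem_cons] at hv
              rcases hv with hv | rfl | rfl | hv
              · exact ⟨v, by simp [hv], h1, h2⟩
              · refine ⟨v + w, by simp, haw, ?_⟩
                have := gw.2 hw
                simp; omega
              · exact absurd hw h1
              · exact ⟨v, by simp [hv], h1, h2⟩
          · left
            have haw : (a + w).1 ≠ 0 := by simp; omega
            have e : (ups (P ++ (a + w) :: Q)).length + 1 = (ups (P ++ a :: w :: Q)).length := by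
              simp [ups_append, ups_cons_up haw, ups_cons_up ha, ups_cons_up hw]; omega
            rcases g2 with g2 | ⟨g2, _⟩ <;> omega
    · have hp : (P ++ w :: a :: Q).Perm (P ++ a :: w :: Q) :=
        List.Perm.append_left _ (List.Perm.swap _ _ _)
      have e : (ups (P ++ w :: a :: Q)).length = (ups (P ++ a :: w :: Q)).length := by
        unfold ups; exact (hp.filter _).length_eq
      refine ⟨fun v hv => g1 v (hp.mem_iff.1 hv), ?_⟩
      rw [e]
      rcases g2 with g2 | ⟨g2, v, hv, h⟩
      · left; exact g2
      · right; exact ⟨g2, v, hp.mem_iff.2 hv, h⟩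

/-- Steps of a column. -/
def colS (p : List (Fin n) × Finset (Fin n)) : List Pt :=
  p.1.map (dn x) ++ [((1 : ℤ), ∑ i ∈ p.2, (x i : ℤ))]

/-- Steps of a list of columns. -/
def colsS (cols : List (List (Fin n) × Finset (Fin n))) : List Pt := (cols.map (colS x)).flatten

/-- The tail of the step list. -/
def tl (E : List (Fin n)) (cols : List (List (Fin n) × Finset (Fin n))) : List Pt :=
  E.map (dn x) ++ (colsS x cols ++ [((0 : ℤ), -((∑ i, x i : ℕ) : ℤ))])

/-- States of the positive recursion. -/
def T (k : ℕ) (R : List (Fin n)) (b : ℤ) (E : List (Fin n))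
    (cols : List (List (Fin n) × Finset (Fin n))) : List Pt :=
  (List.replicate k ((1 : ℤ), (0 : ℤ)) ++ R.map (dn x)) ++ ((1 : ℤ), b) :: tl x E cols

/-- Combinatorial admissibility of a list of columns, given the set of available indices. -/
def Good : Finset (Fin n) → List (List (Fin n) × Finset (Fin n)) → Prop
  | S, [] => S = ∅
  | S, p :: cols => p.2 ⊆ S ∪ p.1.toFinset ∧ Good ((S ∪ p.1.toFinset) \ p.2) cols

theorem colsS_prop (cols : List (List (Fin n) × Finset (Fin n))) :
    (∀ v ∈ colsS x cols, 0 ≤ v.1 ∧ (v.1 = 0 → v.2 ≤ 0)) ∧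
    (ups (colsS x cols)).length = cols.length := by
  induction cols with
  | nil => simp [colsS, ups]
  | cons p cols ih =>
    have e : colsS x (p :: cols) = p.1.map (dn x) ++ ((1 : ℤ), ∑ i ∈ p.2, (x i : ℤ)) :: colsS x cols := by
      simp [colsS, colS]
    rw [e]
    constructor
    · intro v hv
      simp only [List.mem_append, List.mem_map, List.mem_cons] at hv
      rcases hv with ⟨i, _, rfl⟩ | rfl | hv
      · simp [dn]
      · simp
      · exact ih.1 v hv
    · have e2 : ups (p.1.map (dn x)) = [] := by
        unfold ups; rw [List.filter_eq_nil_iff]; simp [dn]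
      rw [ups_append, e2, ups_cons_up (by simp)]
      simp [ih.2]

theorem T_SD (k : ℕ) (b : ℤ) (E : List (Fin n)) (cols : List (List (Fin n) × Finset (Fin n)))
    (hk : k + 1 + cols.length = c) (hb : b < 0) : SD c (T x k [] b E cols) := by
  have h := colsS_prop x cols
  constructor
  · intro v hv
    simp only [T, tl, List.map_nil, List.append_nil, List.mem_append, List.mem_map, List.mem_cons,
      List.mem_replicate, List.not_mem_nil, or_false] at hv
    rcases hv with ⟨_, rfl⟩ | rfl | ⟨i, _, rfl⟩ | hv | rfl
    · simp
    · simp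
    · simp [dn]
    · exact h.1 v hv
    · simp
      exact Finset.sum_nonneg (fun i _ => by positivity)
  · right
    constructor
    · have e2 : ups (E.map (dn x)) = [] := by
        unfold ups; rw [List.filter_eq_nil_iff]; simp [dn]
      have e3 : ups (List.replicate k ((1 : ℤ), (0 : ℤ))) = List.replicate k ((1 : ℤ), (0 : ℤ)) := by
        apply ups_self; intro v hv; rw [(List.mem_replicate.1 hv).2]; simp
      have e4 : ups [((0 : ℤ), -((∑ i, x i : ℕ) : ℤ))] = [] := by simp [ups]
      unfold T tl
      rw [List.map_nil, List.append_nil, ups_append, ups_cons_up (by simp), ups_append, ups_append, e2, e3, e4]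
      simp [h.2]; omega
    · exact ⟨(1, b), by simp [T], by simp, hb⟩

theorem T_push (k : ℕ) (R : List (Fin n)) (a : Fin n) (b : ℤ) (E : List (Fin n))
    (cols : List (List (Fin n) × Finset (Fin n))) :
    (List.replicate k ((1 : ℤ), (0 : ℤ)) ++ R.map (dn x)) ++ ((1 : ℤ), b) :: dn x a :: tl x E cols
      = T x k R b (a :: E) cols := by
  simp [T, tl]

theorem T_cut (k : ℕ) (R : List (Fin n)) (a : Fin n) (b : ℤ) (E : List (Fin n))
    (cols : List (List (Fin n) × Finset (Fin n))) :
    (List.replicate k ((1 : ℤ), (0 : ℤ)) ++ R.map (dn x)) ++ (dn x a + ((1 : ℤ), b)) :: tl x E cols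
      = T x k R (b - x a) E cols := by
  simp [T, dn]; ring

theorem T_old (k : ℕ) (R : List (Fin n)) (a : Fin n) (b : ℤ) (E : List (Fin n))
    (cols : List (List (Fin n) × Finset (Fin n))) :
    T x k (R ++ [a]) b E cols = (List.replicate k ((1 : ℤ), (0 : ℤ)) ++ R.map (dn x)) ++
      dn x a :: ((1 : ℤ), b) :: tl x E cols := by
  simp [T]

/-- Insideness -/
abbrev Ins (L : List Pt) : Prop :=
  Inside (rect c (∑ i, x i)) (pathFrom (0, ((∑ i, x i : ℕ) : ℤ)) L)

theorem T_step (hx : ∀ i, 0 < x i) (k : ℕ) (R : List (Fin n)) (a : Fin n) (b : ℤ) (E : List (Fin n))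
    (cols : List (List (Fin n) × Finset (Fin n))) :
    (Ins x c (T x k R b (a :: E) cols) → PP x c (T x k (R ++ [a]) b E cols) =
      x a * PP x c (T x k R (b - x a) E cols) + PP x c (T x k R b (a :: E) cols)) ∧
    (¬ Ins x c (T x k R b (a :: E) cols) → PP x c (T x k (R ++ [a]) b E cols) =
      x a * PP x c (T x k R (b - x a) E cols)) := by
  have hdet : det (dn x a) ((1 : ℤ), b) = x a := by simp [det, dn]
  have hpos : 0 < det (dn x a) ((1 : ℤ), b) := by rw [hdet]; exact_mod_cast hx a
  have hch : NL ((List.replicate k ((1 : ℤ), (0 : ℤ)) ++ R.map (dn x)) ++ [dn x a]) := by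
    rw [List.append_assoc]
    apply NL_flat
    intro v hv
    simp only [List.mem_append, List.mem_map, List.mem_singleton] at hv
    rcases hv with ⟨i, _, rfl⟩ | rfl <;> simp [dn]
  have hni := not_IP_turn x c (P := List.replicate k ((1 : ℤ), (0 : ℤ)) ++ R.map (dn x))
    (Q := tl x E cols) hpos
  have hna : (det (dn x a) ((1 : ℤ), b)).natAbs = x a := by rw [hdet]; simp
  rw [T_old, ← T_push, ← T_cut]
  constructor
  · intro hin
    unfold PP
    rw [mult_in hs_pos hni hch hpos hin, hna]
  · intro hin
    unfold PP
    rw [mult_out hs_pos hni hch hpos hin, hna]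

theorem T_dead (hx : ∀ i, 0 < x i) (k : ℕ) (cols : List (List (Fin n) × Finset (Fin n)))
    (hk : k + 1 + cols.length = c) (R : List (Fin n)) : ∀ (b : ℤ) (E : List (Fin n)),
    R.Nodup → (∀ J ⊆ R.toFinset, ∑ i ∈ J, (x i : ℤ) ≠ b) → Ins x c (T x k R b E cols) →
    PP x c (T x k R b E cols) = 0 := by
  induction R using List.reverseRecOn with
  | nil =>
    intro b E _ hJ hin
    have hb0 : b ≠ 0 := by
      have := hJ ∅ (by simp)
      simpa using this.symm
    apply PP_dead
    apply T_SD x c k b E cols hk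
    unfold Ins T at hin
    rw [inside_append, inside_cons] at hin
    have h1 := (inside_start hin.2.2).2.2.2
    simp at h1
    omega
  | append_singleton R a ih =>
    intro b E hnd hJ hin
    have hnd' : R.Nodup := (List.nodup_append.1 hnd).1
    have haR : a ∉ R := by
      have := List.nodup_middle.1 hnd
      simpa using (List.nodup_cons.1 this).1
    have hcut : PP x c (T x k R (b - x a) E cols) = 0 := by
      apply ih _ _ hnd'
      · intro J hJR he
        apply hJ (insert a J)
        · intro i hi
          rw [Finset.mem_insert] at hi
          rcases hi with rfl | hi
          · simp
          · have := hJR hi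
            simp at this ⊢; right; exact this
        · rw [Finset.sum_insert]
          · rw [he]; ring
          · intro h; exact haR (by simpa using hJR h)
      · rw [← T_cut]; rw [T_old] at hin; exact inside_merge hin
    obtain ⟨s1, s2⟩ := T_step x c hx k R a b E cols
    by_cases hp : Ins x c (T x k R b (a :: E) cols)
    · rw [s1 hp, hcut, ih b (a :: E) hnd' _ hp]
      · simp
      · intro J hJR
        apply hJ
        intro i hi
        have := hJR hi
        simp at this ⊢; right; exact this
    · rw [s2 hp, hcut]; simp

theorem sum_dn (R : List (Fin n)) (h : R.Nodup) :
    (R.map (dn x)).sum = (0, -∑ i ∈ R.toFinset, (x i : ℤ)) := by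
  rw [List.sum_toFinset _ h]
  induction R with
  | nil => simp; rfl
  | cons a R ih =>
    rw [List.map_cons, List.sum_cons, ih (List.nodup_cons.1 h).2]
    simp [dn]; ring

theorem sum_le_univ (I : Finset (Fin n)) : ∑ i ∈ I, (x i : ℤ) ≤ ∑ i, (x i : ℤ) :=
  Finset.sum_le_sum_of_subset_of_nonneg (Finset.subset_univ _) (fun i _ _ => by positivity)

/-- The claim of the induction for the positive multiplicity. -/
def Alive (cols : List (List (Fin n) × Finset (Fin n))) (k : ℕ) (R : List (Fin n)) : Prop :=
  ∀ (E : List (Fin n)) (I : Finset (Fin n)),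
    (R ++ E ++ (cols.map Prod.fst).flatten).Nodup → I ⊆ R.toFinset →
    Good ((R.toFinset \ I) ∪ E.toFinset) cols →
    Ins x c (T x k R (∑ i ∈ I, (x i : ℤ)) E cols) →
    PP x c (T x k R (∑ i ∈ I, (x i : ℤ)) E cols) =
      (∏ i ∈ I, x i) * (cols.map (fun p => ∏ i ∈ p.2, x i)).prod

theorem Alive_step (hx : ∀ i, 0 < x i)
    (hg : ∀ I J : Finset (Fin n), ∑ i ∈ I, (x i : ℤ) = ∑ i ∈ J, (x i : ℤ) → I = J)
    (cols : List (List (Fin n) × Finset (Fin n))) (k : ℕ) (hk : k + 1 + cols.length = c)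
    (R : List (Fin n)) (a : Fin n) (ih : Alive x c cols k R) : Alive x c cols k (R ++ [a]) := by
  intro E I hnd hI hgood hin
  have hnd1 : (R ++ [a]).Nodup := (List.nodup_append.1 (List.nodup_append.1 hnd).1).1
  have hndR : R.Nodup := (List.nodup_append.1 hnd1).1
  have haR : a ∉ R := by
    have := List.nodup_middle.1 hnd1
    simpa using (List.nodup_cons.1 this).1
  have hndE : (R ++ (a :: E) ++ (cols.map Prod.fst).flatten).Nodup := by simpa using hnd
  have hnd0 : (R ++ E ++ (cols.map Prod.fst).flatten).Nodup := by
    refine List.Nodup.sublist ?_ hndE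
    exact List.Sublist.append (List.Sublist.append (List.Sublist.refl _) (List.sublist_cons_self _ _))
      (List.Sublist.refl _)
  obtain ⟨s1, s2⟩ := T_step x c hx k R a (∑ i ∈ I, (x i : ℤ)) E cols
  have hinc : Ins x c (T x k R (∑ i ∈ I, (x i : ℤ) - x a) E cols) := by
    rw [← T_cut]; rw [T_old] at hin; exact inside_merge hin
  by_cases haI : a ∈ I
  · have he : ∑ i ∈ I, (x i : ℤ) - x a = ∑ i ∈ I.erase a, (x i : ℤ) := by
      rw [← Finset.add_sum_erase I _ haI]; ring
    have hpr : ∏ i ∈ I, x i = x a * ∏ i ∈ I.erase a, x i := (Finset.mul_prod_erase I _ haI).symm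
    have h1 : PP x c (T x k R (∑ i ∈ I, (x i : ℤ) - x a) E cols) =
        (∏ i ∈ I.erase a, x i) * (cols.map (fun p => ∏ i ∈ p.2, x i)).prod := by
      rw [he]
      rw [he] at hinc
      apply ih E _ hnd0 _ _ hinc
      · intro i hi
        rw [Finset.mem_erase] at hi
        have := hI hi.2
        simp at this ⊢
        tauto
      · convert hgood using 2
        ext i
        simp only [Finset.mem_sdiff, List.mem_toFinset, Finset.mem_erase, List.mem_append,
          List.mem_singleton]
        constructor
        · rintro ⟨h1, h2⟩
          refine ⟨Or.inl h1, fun h3 => h2 ⟨?_, h3⟩⟩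
          rintro rfl; exact haR h1
        · rintro ⟨h1 | rfl, h2⟩
          · exact ⟨h1, fun h3 => h2 h3.2⟩
          · exact absurd haI h2
    by_cases hp : Ins x c (T x k R (∑ i ∈ I, (x i : ℤ)) (a :: E) cols)
    · rw [s1 hp, h1, hpr, T_dead x c hx k cols hk R _ _ hndR _ hp]
      · ring
      · intro J hJ heq
        have := hg _ _ heq
        subst this
        exact haR (by simpa using hJ haI)
    · rw [s2 hp, h1, hpr]; ring
  · have hIR : I ⊆ R.toFinset := by
      intro i hi
      have := hI hi
      simp at this ⊢
      rcases this with rfl | h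
      · exact absurd hi haI
      · exact h
    have h0 : PP x c (T x k R (∑ i ∈ I, (x i : ℤ) - x a) E cols) = 0 := by
      apply T_dead x c hx k cols hk R _ _ hndR _ hinc
      intro J hJ heq
      have haJ : a ∉ J := fun h => haR (by simpa using hJ h)
      have : ∑ i ∈ insert a J, (x i : ℤ) = ∑ i ∈ I, (x i : ℤ) := by
        rw [Finset.sum_insert haJ, heq]; ring
      have := hg _ _ this
      exact haI (this ▸ Finset.mem_insert_self a J)
    have hp : Ins x c (T x k R (∑ i ∈ I, (x i : ℤ)) (a :: E) cols) := by
      rw [← T_push]; rw [T_old] at hin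
      apply inside_swap hin
      have hs := sum_dn x R hndR
      have h1 := sum_le_univ x R.toFinset
      have h2 : ∑ i ∈ I, (x i : ℤ) ≤ ∑ i ∈ R.toFinset, (x i : ℤ) :=
        Finset.sum_le_sum_of_subset_of_nonneg hIR (fun i _ _ => by positivity)
      have h3 : 0 ≤ ∑ i ∈ I, (x i : ℤ) := Finset.sum_nonneg (fun i _ => by positivity)
      rw [List.sum_append, hs]
      simp [rect]
      refine ⟨by positivity, by omega, by linarith, by linarith⟩
    rw [s1 hp, h0, ih (a :: E) I hndE hIR _ hp]
    · ring
    · convert hgood using 1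
      ext i
      simp only [Finset.mem_union, Finset.mem_sdiff, List.mem_toFinset, List.mem_append,
        List.mem_cons]
      by_cases hia : i = a
      · subst hia; simp [haI]
      · simp [hia]

theorem T_alive (hx : ∀ i, 0 < x i)
    (hg : ∀ I J : Finset (Fin n), ∑ i ∈ I, (x i : ℤ) = ∑ i ∈ J, (x i : ℤ) → I = J)
    (cols : List (List (Fin n) × Finset (Fin n))) : ∀ (k : ℕ) (_ : k + 1 + cols.length = c)
    (R : List (Fin n)), Alive x c cols k R := by
  induction cols with
  | nil =>
    intro k hk R
    induction R using List.reverseRecOn with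
    | nil =>
      intro E I hnd hI hgood hin
      have hI0 : I = ∅ := by simpa using hI
      subst hI0
      have hE : E = [] := by simpa [Good] using hgood
      subst hE
      have : PP x c (T x k [] (∑ i ∈ (∅ : Finset (Fin n)), (x i : ℤ)) [] []) = 1 := by
        apply mult_init
        rw [IP_iff]
        simp at hk
        rw [← hk, List.replicate_succ']
        simp [T, tl, colsS]
      rw [this]; simp
    | append_singleton R a ihR => exact Alive_step x c hx hg [] k hk R a ihR
  | cons p cols ihc =>
    intro k hk R
    induction R using List.reverseRecOn with
    | nil =>
      intro E I hnd hI hgood hin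
      have hI0 : I = ∅ := by simpa using hI
      subst hI0
      have e : T x k [] (∑ i ∈ (∅ : Finset (Fin n)), (x i : ℤ)) E (p :: cols) =
          T x (k + 1) (E ++ p.1) (∑ i ∈ p.2, (x i : ℤ)) [] cols := by
        rw [T, T, List.replicate_succ']
        simp [tl, colsS, colS]
      rw [e] at hin ⊢
      obtain ⟨g1, g2⟩ := hgood
      rw [ihc (k + 1) (by simp at hk; omega) (E ++ p.1) [] p.2 _ _ _ hin]
      · simp
      · simpa using hnd
      · simpa using g1
      · simpa using g2
    | append_singleton R a ihR => exact Alive_step x c hx hg (p :: cols) k hk R a ihR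

end Plus


/-! ## Assembling -/
section Final
variable {n : ℕ}

theorem good_ofFn {c : ℕ} : ∀ (A : Fin c → List (Fin n)) (B : Fin c → Finset (Fin n))
    (S : Finset (Fin n)),
    (∀ k, ∀ i ∈ B k, i ∈ S ∨ ∃ j, j ≤ k ∧ i ∈ A j) →
    (∀ k l i, i ∈ B k → i ∈ B l → k = l) →
    (∀ i ∈ S, ∃ k, i ∈ B k) →
    (∀ j, ∀ i ∈ A j, ∃ k, j ≤ k ∧ i ∈ B k) →
    Good S (List.ofFn fun k => (A k, B k)) := by
  induction c with
  | zero =>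
    intro A B S _ _ h3 _
    simp only [List.ofFn_zero, Good]
    rw [Finset.eq_empty_iff_forall_notMem]
    intro i hi
    obtain ⟨k, _⟩ := h3 i hi
    exact k.elim0
  | succ c ih =>
    intro A B S h1 h2 h3 h4
    rw [List.ofFn_succ]
    constructor
    · intro i hi
      rcases h1 0 i hi with h | ⟨j, hj, h⟩
      · simp [h]
      · have : j = 0 := Fin.le_zero_iff.1 hj
        subst this
        simp [h]
    · apply ih (fun k => A k.succ) (fun k => B k.succ)
      · intro k i hi
        by_cases h0 : i ∈ S ∪ (A 0).toFinset
        · left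
          rw [Finset.mem_sdiff]
          refine ⟨h0, fun hb => ?_⟩
          exact absurd (h2 _ _ i hi hb) (Fin.succ_ne_zero k)
        · right
          rw [Finset.mem_union, List.mem_toFinset, not_or] at h0
          rcases h1 k.succ i hi with h | ⟨j, hj, h⟩
          · exact absurd h h0.1
          · obtain rfl | ⟨j', rfl⟩ := Fin.eq_zero_or_eq_succ j
            · exact absurd h h0.2
            · exact ⟨j', Fin.succ_le_succ_iff.1 hj, h⟩
      · intro k l i hk hl
        exact Fin.succ_injective _ (h2 _ _ i hk hl)
      · intro i hi
        rw [Finset.mem_sdiff, Finset.mem_union, List.mem_toFinset] at hi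
        have : ∃ k, i ∈ B k := by
          rcases hi.1 with h | h
          · exact h3 i h
          · obtain ⟨k, _, hk⟩ := h4 0 i h
            exact ⟨k, hk⟩
        obtain ⟨k, hk⟩ := this
        obtain rfl | ⟨k', rfl⟩ := Fin.eq_zero_or_eq_succ k
        · exact absurd hk hi.2
        · exact ⟨k', hk⟩
      · intro j i hi
        obtain ⟨k, hk, hb⟩ := h4 j.succ i hi
        obtain rfl | ⟨k', rfl⟩ := Fin.eq_zero_or_eq_succ k
        · exact absurd (Fin.le_zero_iff.1 hk) (Fin.succ_ne_zero j)
        · exact ⟨k', Fin.succ_le_succ_iff.1 hk, hb⟩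

theorem ins_downs (x : Fin n → ℕ) (c d : ℕ) (R : List (Fin n)) : ∀ (p : Pt), p ∈ rect c d →
    p + (R.map (dn x)).sum ∈ rect c d → Inside (rect c d) (pathFrom p (R.map (dn x))) := by
  induction R with
  | nil => intro p hp _; exact inside_nil.2 hp
  | cons a R ih =>
    intro p hp hq
    rw [List.map_cons, List.sum_cons] at hq
    rw [List.map_cons, inside_cons]
    have hs : (R.map (dn x)).sum.2 ≤ 0 ∧ (R.map (dn x)).sum.1 = 0 := by
      clear ih hq
      induction R with
      | nil => simp
      | cons b R ih =>
        rw [List.map_cons, List.sum_cons]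
        simp [dn] at ih ⊢
        refine ⟨?_, ih.2⟩
        have := ih.1
        omega
    refine ⟨hp, ih _ ?_ ?_⟩
    · obtain ⟨h1, h2, h3, h4⟩ := hp
      obtain ⟨g1, g2, g3, g4⟩ := hq
      obtain ⟨s1, s2⟩ := hs
      simp only [Prod.fst_add, Prod.snd_add] at g1 g2 g3 g4
      have : (dn x a).2 ≤ 0 := by simp [dn]
      have : (dn x a).1 = 0 := by simp [dn]
      refine ⟨?_, ?_, ?_, ?_⟩ <;> simp only [Prod.fst_add, Prod.snd_add] <;> omega
    · rw [add_assoc]; exact hq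

theorem colsS_cons (x : Fin n → ℕ) (p : List (Fin n) × Finset (Fin n))
    (cols : List (List (Fin n) × Finset (Fin n))) : colsS x (p :: cols) =
      p.1.map (dn x) ++ ((1 : ℤ), ∑ i ∈ p.2, (x i : ℤ)) :: colsS x cols := by
  simp [colsS, colS]

theorem downs_dn (x : Fin n → ℕ) (R : List (Fin n)) : downs (R.map (dn x)) = R.map (dn x) := by
  unfold downs; rw [List.filter_eq_self]; simp [dn]

theorem ups_dn (x : Fin n → ℕ) (R : List (Fin n)) : ups (R.map (dn x)) = [] := by
  unfold ups; rw [List.filter_eq_nil_iff]; simp [dn]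

theorem ups_colsS (x : Fin n → ℕ) (cols : List (List (Fin n) × Finset (Fin n))) :
    ups (colsS x cols) = cols.map (fun p => ((1 : ℤ), ∑ i ∈ p.2, (x i : ℤ))) := by
  induction cols with
  | nil => simp [colsS, ups]
  | cons p cols ih =>
    rw [colsS_cons, ups_append, ups_dn, ups_cons_up (by simp), ih]; simp

theorem downs_colsS (x : Fin n → ℕ) (cols : List (List (Fin n) × Finset (Fin n))) :
    downs (colsS x cols) = (cols.map Prod.fst).flatten.map (dn x) := by
  induction cols with
  | nil => simp [colsS, downs]
  | cons p cols ih =>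
    rw [colsS_cons, downs_append, downs_dn, downs_cons_up (by simp), ih]; simp

theorem cols_inside (x : Fin n → ℕ) (c : ℕ) (cols : List (List (Fin n) × Finset (Fin n))) :
    ∀ (k : ℕ) (S : Finset (Fin n)), k + cols.length = c → Good S cols →
    (cols.map Prod.fst).flatten.Nodup → (∀ i ∈ (cols.map Prod.fst).flatten, i ∉ S) →
    Inside (rect c (∑ i, x i)) (pathFrom ((k : ℤ), ((∑ i, x i : ℕ) : ℤ) - ∑ i ∈ S, (x i : ℤ))
      (colsS x cols ++ [((0 : ℤ), -((∑ i, x i : ℕ) : ℤ))])) := by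
  have hr : ∀ (k : ℕ) (S : Finset (Fin n)), k ≤ c →
      ((k : ℤ), ((∑ i, x i : ℕ) : ℤ) - ∑ i ∈ S, (x i : ℤ)) ∈ rect c (∑ i, x i) := by
    intro k S hk
    have h1 := sum_le_univ x S
    have h3 : 0 ≤ ∑ i ∈ S, (x i : ℤ) := Finset.sum_nonneg (fun i _ => by positivity)
    refine ⟨?_, ?_, ?_, ?_⟩
    · positivity
    · simpa using hk
    · push_cast; simp; exact h1
    · simp; exact h3
  induction cols with
  | nil =>
    intro k S hk hg _ _
    have hS : S = ∅ := hg
    subst hS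
    simp only [colsS, List.map_nil, List.flatten_nil, List.nil_append]
    rw [inside_cons, inside_nil]
    simp at hk
    refine ⟨hr k ∅ (by omega), ?_⟩
    have := hr k Finset.univ (by omega)
    simpa using this
  | cons p cols ih =>
    intro k S hk hg hnd hS
    simp only [List.length_cons] at hk
    obtain ⟨g1, g2⟩ := hg
    simp only [List.map_cons, List.flatten_cons] at hnd hS
    rw [List.nodup_append] at hnd
    obtain ⟨n1, n2, n3⟩ := hnd
    rw [colsS_cons, List.append_assoc, inside_append, List.cons_append, inside_cons]
    have hdis : Disjoint S p.1.toFinset := by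
      rw [Finset.disjoint_left]
      intro i hi hp
      exact hS i (by simp at hp; simp [hp]) hi
    have e1 : (((k : ℤ), ((∑ i, x i : ℕ) : ℤ) - ∑ i ∈ S, (x i : ℤ)) : Pt) + (p.1.map (dn x)).sum =
        ((k : ℤ), ((∑ i, x i : ℕ) : ℤ) - ∑ i ∈ S ∪ p.1.toFinset, (x i : ℤ)) := by
      rw [sum_dn x _ n1, Finset.sum_union hdis]
      ext
      · simp
      · simp; ring
    have e2 : (((k : ℤ), ((∑ i, x i : ℕ) : ℤ) - ∑ i ∈ S ∪ p.1.toFinset, (x i : ℤ)) : Pt) +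
        ((1 : ℤ), ∑ i ∈ p.2, (x i : ℤ)) =
        (((k + 1 : ℕ) : ℤ), ((∑ i, x i : ℕ) : ℤ) - ∑ i ∈ (S ∪ p.1.toFinset) \ p.2, (x i : ℤ)) := by
      have := Finset.sum_sdiff (f := fun i => (x i : ℤ)) g1
      ext
      · simp
      · simp only [Prod.snd_add]; linarith
    rw [e1, e2]
    refine ⟨?_, hr k _ (by omega), ?_⟩
    · apply ins_downs
      · exact hr k S (by omega)
      · rw [e1]; exact hr k _ (by omega)
    · apply ih (k + 1) _ (by omega) g2 n2
      intro i hi hc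
      rw [Finset.mem_sdiff, Finset.mem_union, List.mem_toFinset] at hc
      rcases hc.1 with h | h
      · exact hS i (List.mem_append_right _ hi) h
      · exact n3 i h i hi rfl

/-- The polynomial version of `Phi`. -/
theorem phi_poly (l : List (Finset (Fin n))) : ∃ Q : MvPolynomial (Fin n) ℤ, ∀ x : Fin n → ℕ,
    MvPolynomial.eval (fun i => (x i : ℤ)) Q =
      Phi (l.map (fun b => ((1 : ℤ), ∑ i ∈ b, (x i : ℤ)))) (0, -((∑ i, x i : ℕ) : ℤ)) := by
  have hsum : ∀ l : List (Finset (Fin n)), ∃ Q : MvPolynomial (Fin n) ℤ, ∀ x : Fin n → ℕ,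
      MvPolynomial.eval (fun i => (x i : ℤ)) Q =
      (l.map (fun b => ((1 : ℤ), ∑ i ∈ b, (x i : ℤ)))).sum.2 := by
    intro l
    induction l with
    | nil => exact ⟨0, by simp⟩
    | cons b l ih =>
      obtain ⟨Q, hQ⟩ := ih
      refine ⟨(∑ i ∈ b, MvPolynomial.X i) + Q, fun x => ?_⟩
      simp [hQ x]
  have hsum1 : ∀ (l : List (Finset (Fin n))) (x : Fin n → ℕ),
      (l.map (fun b => ((1 : ℤ), ∑ i ∈ b, (x i : ℤ)))).sum.1 = l.length := by
    intro l x
    induction l with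
    | nil => simp
    | cons b l ih => rw [List.map_cons, List.sum_cons, Prod.fst_add, ih]; simp; ring
  induction l with
  | nil => exact ⟨1, by simp [Phi]⟩
  | cons b l ih =>
    obtain ⟨Q, hQ⟩ := ih
    obtain ⟨W, hW⟩ := hsum l
    refine ⟨-(W - (∑ i, MvPolynomial.X i) - (∑ i ∈ b, MvPolynomial.X i) * (l.length : MvPolynomial (Fin n) ℤ)) * Q,
      fun x => ?_⟩
    rw [List.map_cons, Phi, ← hQ x]
    simp only [det, Prod.fst_add, Prod.snd_add, hsum1 l x, ← hW x]
    simp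
    left; ring

theorem flatten_ofFn_unique {c : ℕ} : ∀ (A : Fin c → List (Fin n)), (List.ofFn A).flatten.Nodup →
    ∀ j k i, i ∈ A j → i ∈ A k → j = k := by
  intro A h j k i hj hk
  rw [List.nodup_flatten] at h
  by_contra hne
  have hp := h.2
  rw [List.pairwise_ofFn] at hp
  rcases lt_or_gt_of_ne hne with hlt | hlt
  · exact (hp hlt) hj hk
  · exact (hp hlt) hk hj

end Final

/-- For every admissible pair `(A,B)` there is a polynomial in
`ℤ[X₁,…,Xₙ]` computing `mult(γ(A,B))` for all generic positive `x₁,…,xₙ`. -/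
theorem mult_gammaAB_polynomial (c n : ℕ) (hc : 0 < c) (hn : 0 < n)
    (A : Fin c → List (Fin n)) (B : Fin c → Finset (Fin n)) (hAB : IsAdmissible A B) :
    ∃ P : MvPolynomial (Fin n) ℤ,
      ∀ x : Fin n → ℕ, (∀ i, 0 < x i) → Generic x →
        ((multRect c (∑ i, x i) {c} (Multiset.replicate c 1)
            ((List.ofFn x : List ℕ) : Multiset ℕ) {∑ i, x i} (gammaAB x A B) : ℕ) : ℤ)
          = MvPolynomial.eval (fun i => (x i : ℤ)) P := by
  obtain ⟨hA, hB, hB0, hsub⟩ := hAB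
  set cols : List (List (Fin n) × Finset (Fin n)) := List.ofFn (fun k => (A k, B k)) with hcols
  have hfst : cols.map Prod.fst = List.ofFn A := by
    rw [hcols, List.map_ofFn]; rfl
  have hnd : (List.ofFn A).flatten.Nodup := by
    rw [← Multiset.coe_nodup, hA]; exact Finset.univ.nodup
  have huniq := flatten_ofFn_unique A hnd
  have hsub1 : ∀ k, ∀ i ∈ B k, ∃ j, j ≤ k ∧ i ∈ A j := by
    intro k i hi
    have := hsub k hi
    rw [Finset.mem_sdiff, Finset.mem_filter] at this
    exact this.1.2
  have hgood : Good ∅ cols := by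
    apply good_ofFn
    · intro k i hi; exact Or.inr (hsub1 k i hi)
    · intro k l i hk hl; exact (hB i).unique hk hl
    · simp
    · intro j i hi
      obtain ⟨k, hk, _⟩ := hB i
      obtain ⟨j', hj', h⟩ := hsub1 k i hk
      have := huniq j j' i hi h
      subst this
      exact ⟨k, hj', hk⟩
  have hlen : cols.length = c := by simp [hcols]
  obtain ⟨Q, hQ⟩ := phi_poly (cols.map Prod.snd)
  refine ⟨(cols.map (fun p => ∏ i ∈ p.2, (MvPolynomial.X i : MvPolynomial (Fin n) ℤ))).prod * Q, ?_⟩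
  intro x hx hgen
  have hinj : Function.Injective x := by
    intro i j hij
    by_contra hne
    exact hgen {i} {j} (by simpa using hne) (by simpa using hij)
  have hg : ∀ I J : Finset (Fin n), ∑ i ∈ I, (x i : ℤ) = ∑ i ∈ J, (x i : ℤ) → I = J := by
    intro I J h
    by_contra hne
    exact hgen I J hne (by exact_mod_cast h)
  have hdpos : 0 < ∑ i, x i :=
    Finset.sum_pos (fun i _ => hx i) ⟨⟨0, hn⟩, Finset.mem_univ _⟩
  have hgam : gammaAB x A B = pathFrom (0, ((∑ i, x i : ℕ) : ℤ))
      (colsS x cols ++ [((0 : ℤ), -((∑ i, x i : ℕ) : ℤ))]) := by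
    unfold gammaAB colsS
    rw [hcols, List.map_ofFn]
    rfl
  have hins : Ins x c (colsS x cols ++ [((0 : ℤ), -((∑ i, x i : ℕ) : ℤ))]) := by
    have := cols_inside x c cols 0 ∅ (by omega) hgood (by rw [hfst]; exact hnd) (by simp)
    unfold Ins; simpa using this
  -- the first column
  obtain ⟨c', rfl⟩ : ∃ c', c = c' + 1 := ⟨c - 1, by omega⟩
  have hcc : cols = (A 0, B 0) :: List.ofFn (fun k : Fin c' => (A k.succ, B k.succ)) := by
    rw [hcols, List.ofFn_succ]
  have hA0 : A 0 ≠ [] := by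
    obtain ⟨i, hi⟩ := hB0 0 rfl
    obtain ⟨j, hj, h⟩ := hsub1 0 i hi
    have : j = 0 := Fin.le_zero_iff.1 hj
    subst this
    exact List.ne_nil_of_mem h
  -- positive multiplicity
  have hplus : PP x (c' + 1) (colsS x cols ++ [((0 : ℤ), -((∑ i, x i : ℕ) : ℤ))]) =
      (cols.map (fun p => ∏ i ∈ p.2, x i)).prod := by
    have e : colsS x cols ++ [((0 : ℤ), -((∑ i, x i : ℕ) : ℤ))] =
        T x 0 (A 0) (∑ i ∈ B 0, (x i : ℤ)) []
          (List.ofFn (fun k : Fin c' => (A k.succ, B k.succ))) := by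
      rw [hcc, colsS_cons]; simp [T, tl]
    have hg' := hgood
    rw [hcc] at hg'
    obtain ⟨g1, g2⟩ := hg'
    rw [e] at hins ⊢
    have hnd' := hnd
    rw [← hfst, hcc] at hnd'
    rw [T_alive x (c' + 1) hx hg _ 0 (by simp; omega) (A 0) [] (B 0) _ _ _ hins]
    · rw [hcc]; simp
    · simpa using hnd'
    · simpa using g1
    · simpa using g2
  -- negative multiplicity
  have hminus : (MM x (c' + 1) (colsS x cols ++ [((0 : ℤ), -((∑ i, x i : ℕ) : ℤ))]) : ℤ) =
      Phi (ups (colsS x cols)) (0, -((∑ i, x i : ℕ) : ℤ)) := by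
    apply MM_phase1 x (c' + 1) (by omega) hdpos hinj
    refine ⟨?_, ?_, ?_, ?_, hins⟩
    · intro v hv
      have hv' : ∃ p ∈ cols, v ∈ colS x p := by simpa [colsS] using hv
      obtain ⟨p, _, hp⟩ := hv'
      simp only [colS, List.mem_append, List.mem_map, List.mem_singleton] at hp
      rcases hp with ⟨i, _, rfl⟩ | rfl
      · have := hx i
        simp [Nice, dn]; omega
      · simp [Nice]; exact Finset.sum_nonneg (fun i _ => by positivity)
    · rw [downs_colsS, hfst, ← Multiset.map_coe, hA]
    · rw [ups_colsS, hcols, List.map_ofFn, List.sum_ofFn]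
      ext
      · simp [Prod.fst_sum]
      · simp only [Prod.snd_sum, Function.comp]
        rw [← Finset.sum_biUnion]
        · push_cast
          apply Finset.sum_congr _ (fun _ _ => rfl)
          ext i
          obtain ⟨k, hk, _⟩ := hB i
          simp only [Finset.mem_biUnion, Finset.mem_univ, true_and, iff_true]
          exact ⟨k, hk⟩
        · intro k _ l _ hkl
          rw [Function.onFun, Finset.disjoint_left]
          intro i hk hl
          exact hkl ((hB i).unique hk hl)
    · rw [hcc, colsS_cons]
      obtain ⟨a, R, hR⟩ := List.exists_cons_of_ne_nil hA0
      simp only [hR]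
      exact ⟨dn x a, _, rfl, rfl⟩
  have hm : multRect (c' + 1) (∑ i, x i) {c' + 1} (Multiset.replicate (c' + 1) 1)
      ((List.ofFn x : List ℕ) : Multiset ℕ) {∑ i, x i} (gammaAB x A B) =
      PP x (c' + 1) (colsS x cols ++ [((0 : ℤ), -((∑ i, x i : ℕ) : ℤ))]) *
      MM x (c' + 1) (colsS x cols ++ [((0 : ℤ), -((∑ i, x i : ℕ) : ℤ))]) := by
    rw [hgam]; rfl
  rw [hm, Nat.cast_mul, hminus, hplus, map_mul, hQ x, ups_colsS, List.map_map]
  congr 1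
  rw [map_list_prod, List.map_map, Nat.cast_list_prod, List.map_map]
  congr 1
  apply List.map_congr_left
  intro p _
  simp

end TropPaths
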